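/- arXiv:0811.1023 — 7 statements merged into one kernel-verified Lean document; each statement's English description precedes it below -/
import Mathlib

section
/- Let K be an infinite field, R = K[x_1,…,x_r], and let I ⊆ R be an Artinian monomial ideal. Then R/I has the WLP if and only if x_1 + x_2 + ⋯ + x_r is a Lefschetz element for R/I. -/
open MvPolynomial

noncomputable def component (r : ℕ) (K : Type*) [Field K]
    (I : Ideal (MvPolynomial (Fin r) K)) (d : ℕ) :
    Submodule K (MvPolynomial (Fin r) K ⧸ I) :=
  (MvPolynomial.homogeneousSubmodule (Fin r) K d).map
    (Ideal.Quotient.mkₐ K I).toLinearMap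

noncomputable def hilb (r : ℕ) (K : Type*) [Field K]
    (I : Ideal (MvPolynomial (Fin r) K)) (d : ℕ) : ℕ :=
  Module.finrank K (component r K I d)

/-- Injectivity of the multiplication map `×L : (R/I)_d → (R/I)_{d+1}`. -/
def mulMapInj (r : ℕ) (K : Type*) [Field K]
    (I : Ideal (MvPolynomial (Fin r) K)) (L : MvPolynomial (Fin r) K) (d : ℕ) : Prop :=
  ∀ a ∈ component r K I d, Ideal.Quotient.mk I L * a = 0 → a = 0

/-- Surjectivity of the multiplication map `×L : (R/I)_d → (R/I)_{d+1}`. -/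
def mulMapSurj (r : ℕ) (K : Type*) [Field K]
    (I : Ideal (MvPolynomial (Fin r) K)) (L : MvPolynomial (Fin r) K) (d : ℕ) : Prop :=
  ∀ b ∈ component r K I (d + 1), ∃ a ∈ component r K I d, Ideal.Quotient.mk I L * a = b

/-- `L` is a Lefschetz element: a linear form for which every multiplication map
`×L : (R/I)_d → (R/I)_{d+1}` has maximal rank (is injective or surjective). -/
def isLefschetzElem (r : ℕ) (K : Type*) [Field K]
    (I : Ideal (MvPolynomial (Fin r) K)) (L : MvPolynomial (Fin r) K) : Prop :=
  L ∈ MvPolynomial.homogeneousSubmodule (Fin r) K 1 ∧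
    ∀ d : ℕ, mulMapInj r K I L d ∨ mulMapSurj r K I L d

/-- The Weak Lefschetz Property. -/
def hasWLP (r : ℕ) (K : Type*) [Field K] (I : Ideal (MvPolynomial (Fin r) K)) : Prop :=
  ∃ L, isLefschetzElem r K I L

section helpers

lemma exists_perturb_end {K V : Type*} [Field K] [Infinite K] [AddCommGroup V] [Module K V]
    [FiniteDimensional K V] (e : V →ₗ[K] V) :
    ∃ t : K, t ≠ 0 ∧ Function.Injective (LinearMap.id + t • e : V →ₗ[K] V) := by
  have hfin := (Module.End.finite_hasEigenvalue (R := K) (M := V) e).union (Set.finite_singleton 0)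
  obtain ⟨s, hs⟩ := hfin.exists_notMem
  simp only [Set.mem_union, Set.mem_ofPred_eq, Set.mem_singleton_iff, not_or] at hs
  obtain ⟨hs1, hs0⟩ := hs
  refine ⟨-s⁻¹, by simpa using hs0, ?_⟩
  rw [injective_iff_map_eq_zero]
  intro v hv
  by_contra hne
  apply hs1
  refine Module.End.hasEigenvalue_of_hasEigenvector (x := v) ⟨?_, hne⟩
  rw [Module.End.mem_eigenspace_iff]
  have h1 : v - s⁻¹ • e v = 0 := by
    simpa [sub_eq_add_neg] using hv
  have h2 : v = s⁻¹ • e v := sub_eq_zero.1 h1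
  calc e v = s • (s⁻¹ • e v) := by rw [smul_smul, mul_inv_cancel₀ hs0, one_smul]
    _ = s • v := by rw [← h2]

lemma exists_perturb_inj {K V W : Type*} [Field K] [Infinite K] [AddCommGroup V] [Module K V]
    [AddCommGroup W] [Module K W] [FiniteDimensional K V] (f g : V →ₗ[K] W)
    (hf : Function.Injective f) :
    ∃ t : K, t ≠ 0 ∧ Function.Injective (f + t • g : V →ₗ[K] W) := by
  obtain ⟨h, hh⟩ := LinearMap.exists_leftInverse_of_injective f (LinearMap.ker_eq_bot.2 hf)
  obtain ⟨t, ht, hi⟩ := exists_perturb_end (h ∘ₗ g)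
  refine ⟨t, ht, ?_⟩
  have : (LinearMap.id + t • (h ∘ₗ g) : V →ₗ[K] V) = h ∘ₗ (f + t • g) := by
    rw [← hh, LinearMap.comp_add, LinearMap.comp_smul]
  rw [this, LinearMap.coe_comp] at hi
  exact hi.of_comp

lemma exists_perturb_surj {K V W : Type*} [Field K] [Infinite K] [AddCommGroup V] [Module K V]
    [AddCommGroup W] [Module K W] [FiniteDimensional K W] (f g : V →ₗ[K] W)
    (hf : Function.Surjective f) :
    ∃ t : K, t ≠ 0 ∧ Function.Surjective (f + t • g : V →ₗ[K] W) := by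
  obtain ⟨h, hh⟩ := LinearMap.exists_rightInverse_of_surjective f (LinearMap.range_eq_top.2 hf)
  obtain ⟨t, ht, hi⟩ := exists_perturb_end (g ∘ₗ h)
  refine ⟨t, ht, ?_⟩
  have : (LinearMap.id + t • (g ∘ₗ h) : W →ₗ[K] W) = (f + t • g) ∘ₗ h := by
    rw [← hh, LinearMap.add_comp, LinearMap.smul_comp]
  have hs := LinearMap.injective_iff_surjective.1 hi
  rw [this, LinearMap.coe_comp] at hs
  exact hs.of_comp

variable {r : ℕ} {K : Type*} [Field K]

lemma mem_component_iff (I : Ideal (MvPolynomial (Fin r) K)) (d : ℕ)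
    (a : MvPolynomial (Fin r) K ⧸ I) :
    a ∈ component r K I d ↔
      ∃ p : MvPolynomial (Fin r) K, p.IsHomogeneous d ∧ Ideal.Quotient.mk I p = a := by
  simp only [component, Submodule.mem_map, mem_homogeneousSubmodule]
  rfl

lemma mul_mem_component (I : Ideal (MvPolynomial (Fin r) K)) (d : ℕ)
    (L : MvPolynomial (Fin r) K) (hL : L.IsHomogeneous 1)
    (a : MvPolynomial (Fin r) K ⧸ I) (ha : a ∈ component r K I d) :
    Ideal.Quotient.mk I L * a ∈ component r K I (d + 1) := by
  obtain ⟨p, hp, rfl⟩ := (mem_component_iff I d a).1 ha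
  refine (mem_component_iff I _ _).2 ⟨L * p, ?_, map_mul _ _ _⟩
  rw [add_comm]
  exact hL.mul hp

/-- Multiplication by a linear form as a linear map between components. -/
noncomputable def mulComp (I : Ideal (MvPolynomial (Fin r) K)) (d : ℕ)
    (L : MvPolynomial (Fin r) K) (hL : L.IsHomogeneous 1) :
    component r K I d →ₗ[K] component r K I (d + 1) :=
  (LinearMap.mulLeft K (Ideal.Quotient.mk I L)).restrict (mul_mem_component I d L hL)

lemma mulComp_coe (I : Ideal (MvPolynomial (Fin r) K)) (d : ℕ)
    (L : MvPolynomial (Fin r) K) (hL : L.IsHomogeneous 1) (a : component r K I d) :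
    (mulComp I d L hL a : MvPolynomial (Fin r) K ⧸ I) = Ideal.Quotient.mk I L * a := rfl

lemma mulMapInj_iff (I : Ideal (MvPolynomial (Fin r) K)) (d : ℕ)
    (L : MvPolynomial (Fin r) K) (hL : L.IsHomogeneous 1) :
    mulMapInj r K I L d ↔ Function.Injective (mulComp I d L hL) := by
  rw [injective_iff_map_eq_zero]
  constructor
  · intro h a ha
    exact Subtype.ext (h a a.2 (congrArg Subtype.val ha))
  · intro h a ha h0
    exact congrArg Subtype.val (h ⟨a, ha⟩ (Subtype.ext h0))

lemma mulMapSurj_iff (I : Ideal (MvPolynomial (Fin r) K)) (d : ℕ)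
    (L : MvPolynomial (Fin r) K) (hL : L.IsHomogeneous 1) :
    mulMapSurj r K I L d ↔ Function.Surjective (mulComp I d L hL) := by
  constructor
  · intro h b
    obtain ⟨a, ha, hab⟩ := h b b.2
    exact ⟨⟨a, ha⟩, Subtype.ext hab⟩
  · intro h b hb
    obtain ⟨a, hab⟩ := h ⟨b, hb⟩
    exact ⟨a, a.2, congrArg Subtype.val hab⟩

lemma mulComp_add_smul (I : Ideal (MvPolynomial (Fin r) K)) (d : ℕ)
    (L M : MvPolynomial (Fin r) K) (hL : L.IsHomogeneous 1) (hM : M.IsHomogeneous 1) (t : K)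
    (h : (L + t • M).IsHomogeneous 1) :
    mulComp I d L hL + t • mulComp I d M hM = mulComp I d (L + t • M) h := by
  ext a
  simp only [LinearMap.add_apply, LinearMap.smul_apply, Submodule.coe_add, Submodule.coe_smul,
    mulComp_coe, map_add, add_mul]
  congr 1
  rw [← smul_mul_assoc]
  rfl

/-- Rescaling of the variables. -/
noncomputable def scaleHom (c : Fin r → K) :
    MvPolynomial (Fin r) K →ₐ[K] MvPolynomial (Fin r) K :=
  aeval (fun i => C (c i) * X i)

lemma scaleHom_scaleHom (c c' : Fin r → K) (h : ∀ i, c i * c' i = 1)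
    (p : MvPolynomial (Fin r) K) : scaleHom c (scaleHom c' p) = p := by
  have : (scaleHom c).comp (scaleHom c') = AlgHom.id K _ := by
    apply MvPolynomial.algHom_ext
    intro i
    simp only [scaleHom, AlgHom.comp_apply, aeval_X, map_mul, AlgHom.id_apply,
      MvPolynomial.algHom_C, MvPolynomial.algebraMap_eq]
    rw [← mul_assoc, ← C_mul, mul_comm (c' i), h, C_1, one_mul]
  exact DFunLike.congr_fun this p

lemma scaleHom_homog (c : Fin r → K) {d : ℕ} {p : MvPolynomial (Fin r) K}
    (hp : p.IsHomogeneous d) : (scaleHom c p).IsHomogeneous d := by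
  have := hp.aeval (S := K) (n := 1) (fun i => C (c i) * X i)
    (fun i => by simpa using (isHomogeneous_C (Fin r) (c i)).mul (isHomogeneous_X K i))
  rwa [one_mul] at this

lemma scaleHom_mem (I : Ideal (MvPolynomial (Fin r) K))
    (hmon : ∃ S : Set (Fin r →₀ ℕ),
      I = Ideal.span ((fun m => (MvPolynomial.monomial m (1 : K))) '' S))
    (c : Fin r → K) {p : MvPolynomial (Fin r) K} (hp : p ∈ I) : scaleHom c p ∈ I := by
  obtain ⟨S, rfl⟩ := hmon
  suffices h : Ideal.span ((fun m => (MvPolynomial.monomial m (1 : K))) '' S) ≤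
      (Ideal.span ((fun m => (MvPolynomial.monomial m (1 : K))) '' S)).comap (scaleHom c) from h hp
  rw [Ideal.span_le]
  rintro _ ⟨m, hm, rfl⟩
  have key : scaleHom c (monomial m (1 : K)) =
      (m.prod fun i k => (C (c i) : MvPolynomial (Fin r) K) ^ k) * monomial m (1 : K) := by
    rw [scaleHom, aeval_monomial, map_one, one_mul, monomial_eq, C_1, one_mul, ← Finsupp.prod_mul]
    simp only [mul_pow]
  simp only [SetLike.mem_coe, Ideal.mem_comap]
  rw [key]
  exact Ideal.mul_mem_left _ _ (Ideal.subset_span ⟨m, hm, rfl⟩)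

lemma mulMapInj_scale (I : Ideal (MvPolynomial (Fin r) K))
    (hmon : ∃ S : Set (Fin r →₀ ℕ),
      I = Ideal.span ((fun m => (MvPolynomial.monomial m (1 : K))) '' S))
    (c c' : Fin r → K) (h : ∀ i, c i * c' i = 1) (L : MvPolynomial (Fin r) K) (d : ℕ)
    (hi : mulMapInj r K I (scaleHom c L) d) : mulMapInj r K I L d := by
  intro a ha h0
  obtain ⟨p, hp, rfl⟩ := (mem_component_iff I d a).1 ha
  rw [← map_mul, Ideal.Quotient.eq_zero_iff_mem] at h0
  have h1 := hi (Ideal.Quotient.mk I (scaleHom c p))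
    ((mem_component_iff I d _).2 ⟨_, scaleHom_homog c hp, rfl⟩)
    (by rw [← map_mul, ← map_mul, Ideal.Quotient.eq_zero_iff_mem]
        exact scaleHom_mem I hmon c h0)
  rw [Ideal.Quotient.eq_zero_iff_mem] at h1 ⊢
  have h2 := scaleHom_mem I hmon c' h1
  rwa [scaleHom_scaleHom c' c (fun i => by rw [mul_comm, h])] at h2

lemma mulMapSurj_scale (I : Ideal (MvPolynomial (Fin r) K))
    (hmon : ∃ S : Set (Fin r →₀ ℕ),
      I = Ideal.span ((fun m => (MvPolynomial.monomial m (1 : K))) '' S))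
    (c c' : Fin r → K) (h : ∀ i, c i * c' i = 1) (L : MvPolynomial (Fin r) K) (d : ℕ)
    (hs : mulMapSurj r K I (scaleHom c L) d) : mulMapSurj r K I L d := by
  intro b hb
  obtain ⟨q, hq, rfl⟩ := (mem_component_iff I _ b).1 hb
  obtain ⟨a, ha, hab⟩ := hs (Ideal.Quotient.mk I (scaleHom c q))
    ((mem_component_iff I _ _).2 ⟨_, scaleHom_homog c hq, rfl⟩)
  obtain ⟨p, hp, rfl⟩ := (mem_component_iff I d a).1 ha
  refine ⟨Ideal.Quotient.mk I (scaleHom c' p),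
    (mem_component_iff I d _).2 ⟨_, scaleHom_homog c' hp, rfl⟩, ?_⟩
  rw [← map_mul, Ideal.Quotient.eq] at hab ⊢
  have h2 := scaleHom_mem I hmon c' hab
  rwa [map_sub, map_mul, scaleHom_scaleHom c' c (fun i => by rw [mul_comm, h]),
    scaleHom_scaleHom c' c (fun i => by rw [mul_comm, h])] at h2

end helpers

/-- For an Artinian monomial ideal `I` over an infinite field, `R/I` has the WLP
if and only if `x₁ + ⋯ + xᵣ` is a Lefschetz element for `R/I`. -/
theorem stmt_2 {r : ℕ} {K : Type*} [Field K] [Infinite K]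
    (I : Ideal (MvPolynomial (Fin r) K))
    (hmon : ∃ S : Set (Fin r →₀ ℕ),
      I = Ideal.span ((fun m => (MvPolynomial.monomial m (1 : K))) '' S))
    (hart : FiniteDimensional K (MvPolynomial (Fin r) K ⧸ I)) :
    hasWLP r K I ↔ isLefschetzElem r K I (∑ i : Fin r, X i) := by
  have hsum1 : (∑ i : Fin r, X i : MvPolynomial (Fin r) K).IsHomogeneous 1 :=
    IsHomogeneous.sum _ _ _ (fun i _ => isHomogeneous_X K i)
  refine ⟨?_, fun h => ⟨_, h⟩⟩
  rintro ⟨L, hL, hLd⟩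
  refine ⟨hsum1, fun d => ?_⟩
  have hL' : L.IsHomogeneous 1 := hL
  rw [homogeneousSubmodule_one_eq_span_X, Submodule.mem_span_range_iff_exists_fun] at hL
  obtain ⟨a, rfl⟩ := hL
  classical
  -- the linear form supported on the missing variables
  let b : Fin r → K := fun i => if a i = 0 then 1 else 0
  have hM : (∑ i : Fin r, b i • X i : MvPolynomial (Fin r) K).IsHomogeneous 1 :=
    (homogeneousSubmodule (Fin r) K 1).sum_mem (fun i _ =>
      (homogeneousSubmodule (Fin r) K 1).smul_mem _ (isHomogeneous_X K i))
  have hLM : ∀ t : K, ((∑ i : Fin r, a i • X i : MvPolynomial (Fin r) K) +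
      t • (∑ i : Fin r, b i • X i)).IsHomogeneous 1 := fun t =>
    (homogeneousSubmodule (Fin r) K 1).add_mem hL'
      ((homogeneousSubmodule (Fin r) K 1).smul_mem _ hM)
  have hscale : ∀ t : K, ((∑ i : Fin r, a i • X i : MvPolynomial (Fin r) K) +
      t • (∑ i : Fin r, b i • X i)) = scaleHom (fun i => a i + t * b i) (∑ i : Fin r, X i) := by
    intro t
    simp only [scaleHom, map_sum, aeval_X, Finset.smul_sum, ← Finset.sum_add_distrib, smul_eq_C_mul]
    refine Finset.sum_congr rfl fun i _ => ?_
    rw [C_add, C_mul]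
    ring
  have hne : ∀ t : K, t ≠ 0 → ∀ i, (a i + t * b i) * (a i + t * b i)⁻¹ = 1 := by
    intro t ht i
    apply mul_inv_cancel₀
    by_cases h : a i = 0 <;> simp [b, h, ht]
  rcases hLd d with h | h
  · left
    rw [mulMapInj_iff I d _ hL'] at h
    obtain ⟨t, ht, hi⟩ := exists_perturb_inj _ (mulComp I d _ hM) h
    rw [mulComp_add_smul I d _ _ hL' hM t (hLM t), ← mulMapInj_iff, hscale] at hi
    exact mulMapInj_scale I hmon _ _ (hne t ht) _ d hi
  · right
    rw [mulMapSurj_iff I d _ hL'] at h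
    obtain ⟨t, ht, hi⟩ := exists_perturb_surj _ (mulComp I d _ hM) h
    rw [mulComp_add_smul I d _ _ hL' hM t (hLM t), ← mulMapSurj_iff, hscale] at hi
    exact mulMapSurj_scale I hmon _ _ (hne t ht) _ d hi
end

section
/- Let J ⊆ I ⊆ R = K[x_1,…,x_r] be homogeneous ideals with codim J = codim I − 1, and let ℓ ∈ R be a linear form such that J : ℓ = J. Set I′ = ℓ·I + J (a basic double link of I). Then for each integer j, dim_K (R/I′)_j = dim_K (R/I)_{j−1} + dim_K (R/J)_j − dim_K (R/J)_{j−1}. -/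
open MvPolynomial

/-- The codimension (height) of an ideal: the infimum of the heights of the primes
containing it. -/
noncomputable def idealCodim {R : Type*} [CommRing R] (I : Ideal R) : ℕ∞ :=
  ⨅ P : {P : PrimeSpectrum R // I ≤ P.asIdeal}, Order.height P.val

lemma aux_comp {r : ℕ} {K : Type*} [Field K] (ℓ i : MvPolynomial (Fin r) K)
    (hℓ : ℓ ∈ MvPolynomial.homogeneousSubmodule (Fin r) K 1) (j : ℕ) :
    homogeneousComponent (j + 1) (ℓ * i) = ℓ * homogeneousComponent j i := by
  let := MvPolynomial.gradedAlgebra (σ := Fin r) (R := K)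
  have h := DirectSum.coe_decompose_mul_add_of_left_mem
    (homogeneousSubmodule (Fin r) K) (i := 1) (j := j) (a := ℓ) (b := i) hℓ
  rw [add_comm j 1]
  rw [← decomposition.decompose'_apply, ← decomposition.decompose'_apply]
  exact h

instance aux_fin {r : ℕ} {K : Type*} [Field K] (d : ℕ) :
    Module.Finite K (homogeneousSubmodule (Fin r) K d) :=
  Module.Finite.iff_fg.mpr (homogeneousSubmodule_fg _ _ d)

lemma aux_hilb {r : ℕ} {K : Type*} [Field K] (I : Ideal (MvPolynomial (Fin r) K)) (d : ℕ) :
    hilb r K I d + Module.finrank K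
      (homogeneousSubmodule (Fin r) K d ⊓ I.restrictScalars K :
        Submodule K (MvPolynomial (Fin r) K)) =
      Module.finrank K (homogeneousSubmodule (Fin r) K d) := by
  set V := homogeneousSubmodule (Fin r) K d
  set f := (Ideal.Quotient.mkₐ K I).toLinearMap
  have h := LinearMap.finrank_range_add_finrank_ker (f.domRestrict V)
  rw [LinearMap.range_domRestrict] at h
  have hk : LinearMap.ker (f.domRestrict V) =
      (I.restrictScalars K).comap V.subtype := by
    ext x
    simp [f, Ideal.Quotient.eq_zero_iff_mem]
  rw [hk] at h
  have e : Module.finrank K ((I.restrictScalars K).comap V.subtype) =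
      Module.finrank K (V ⊓ I.restrictScalars K : Submodule K (MvPolynomial (Fin r) K)) := by
    rw [← Submodule.map_comap_subtype]
    exact (Submodule.equivMapOfInjective _ V.injective_subtype _).finrank_eq
  rw [e] at h
  exact h

/-- Hilbert function of a basic double link `I' = ℓ·I + J`:
`dim (R/I')_j = dim (R/I)_{j-1} + dim (R/J)_j - dim (R/J)_{j-1}`
(stated additively to avoid truncated subtraction). -/
theorem stmt_4 {r : ℕ} {K : Type*} [Field K]
    (J I : Ideal (MvPolynomial (Fin r) K)) (hJI : J ≤ I)
    (hhomI : ∀ p ∈ I, ∀ n : ℕ, MvPolynomial.homogeneousComponent n p ∈ I)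
    (hhomJ : ∀ p ∈ J, ∀ n : ℕ, MvPolynomial.homogeneousComponent n p ∈ J)
    (hcodim : idealCodim J + 1 = idealCodim I)
    (ℓ : MvPolynomial (Fin r) K) (hℓ : ℓ ∈ MvPolynomial.homogeneousSubmodule (Fin r) K 1)
    (hcolon : ∀ x : MvPolynomial (Fin r) K, ℓ * x ∈ J → x ∈ J) :
    ∀ j : ℕ,
      hilb r K (Ideal.span {ℓ} * I ⊔ J) (j + 1) + hilb r K J j =
        hilb r K I j + hilb r K J (j + 1) := by
  intro j
  by_cases h0 : ℓ = 0
  · have hJ : J = ⊤ := by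
      rw [Ideal.eq_top_iff_one]
      exact hcolon 1 (by simp [h0])
    have hI : I = ⊤ := top_le_iff.mp (hJ ▸ hJI)
    subst hJ hI
    rw [sup_top_eq, add_comm]
  set V := homogeneousSubmodule (Fin r) K with hV
  set m := LinearMap.mulLeft K ℓ with hm
  have hinj : Function.Injective m := fun a b hab => mul_left_cancel₀ h0 (by simpa [hm] using hab)
  have hVm : ∀ x ∈ V j, ℓ * x ∈ V (j + 1) := fun x hx => by
    rw [add_comm]
    exact IsHomogeneous.mul hℓ hx
  have hD : (V (j + 1) ⊓ (Ideal.span {ℓ} * I ⊔ J).restrictScalars K :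
      Submodule K (MvPolynomial (Fin r) K)) =
      (V j ⊓ I.restrictScalars K).map m ⊔ (V (j + 1) ⊓ J.restrictScalars K) := by
    apply le_antisymm
    · rintro p ⟨hp, hp'⟩
      obtain ⟨a, ha, q, hq, rfl⟩ := Submodule.mem_sup.mp (show p ∈ Ideal.span {ℓ} * I ⊔ J from hp')
      obtain ⟨i, hi, rfl⟩ := Ideal.mem_span_singleton_mul.mp ha
      have e := homogeneousComponent_eq_self (n := j + 1) hp
      rw [← e, map_add, aux_comp ℓ i hℓ]
      exact Submodule.add_mem_sup
        (Submodule.mem_map.mpr ⟨_, ⟨homogeneousComponent_mem _ _, hhomI i hi j⟩, rfl⟩)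
        ⟨homogeneousComponent_mem _ _, hhomJ q hq _⟩
    · refine sup_le ?_ (inf_le_inf_left _ ?_)
      · rintro _ ⟨i, ⟨hi, hi'⟩, rfl⟩
        exact ⟨hVm i hi, Ideal.mem_sup_left
          (Ideal.mul_mem_mul (Ideal.mem_span_singleton_self ℓ) hi')⟩
      · intro x hx
        exact Ideal.mem_sup_right hx
  have hE : (V j ⊓ I.restrictScalars K).map m ⊓ (V (j + 1) ⊓ J.restrictScalars K) =
      (V j ⊓ J.restrictScalars K).map m := by
    apply le_antisymm
    · rintro _ ⟨⟨i, ⟨hi, hi'⟩, rfl⟩, -, h⟩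
      exact ⟨i, ⟨hi, hcolon i h⟩, rfl⟩
    · rintro _ ⟨i, ⟨hi, hi'⟩, rfl⟩
      exact ⟨⟨i, ⟨hi, hJI hi'⟩, rfl⟩, hVm i hi, J.mul_mem_left _ hi'⟩
  have hfr : ∀ W : Submodule K (MvPolynomial (Fin r) K),
      Module.finrank K (W.map m) = Module.finrank K W := fun W =>
    (Submodule.equivMapOfInjective m hinj W).finrank_eq.symm
  have : FiniteDimensional K (V j ⊓ I.restrictScalars K :
      Submodule K (MvPolynomial (Fin r) K)) := Submodule.finiteDimensional_inf_left _ _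
  have : FiniteDimensional K (V (j + 1) ⊓ J.restrictScalars K :
      Submodule K (MvPolynomial (Fin r) K)) := Submodule.finiteDimensional_inf_left _ _
  have key := Submodule.finrank_sup_add_finrank_inf_eq
    ((V j ⊓ I.restrictScalars K).map m) (V (j + 1) ⊓ J.restrictScalars K)
  rw [hE, ← hD, hfr, hfr] at key
  have h1 := aux_hilb (Ideal.span {ℓ} * I ⊔ J) (j + 1)
  have h2 := aux_hilb J j
  have h3 := aux_hilb I j
  have h4 := aux_hilb J (j + 1)
  clear_value V
  subst hV
  omega
end

section
/- Let K be a field, s ≥ 2, R = K[x_1,…,x_s], I_s = (x_1^s,…,x_s^s), and J_s = (x_1^{s+1}, x_2^{s+1}, x_3^s,…,x_s^s). Then h_{R/I_s}(binom(s,2)) − h_{R/I_s}(binom(s,2) − 1) ≤ h_{R/J_s}(binom(s,2) + 1) − h_{R/J_s}(binom(s,2) + 2). -/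
open MvPolynomial

theorem comp_rank {s : ℕ} {K : Type*} [Field K] (a : Fin s → ℕ) (d : ℕ) :
    hilb s K (Ideal.span {p | ∃ i : Fin s, p = X i ^ (a i)}) d =
      Nat.card {e : Fin s →₀ ℕ // e.degree = d ∧ ∀ i, e i < a i} := by
  set I : Ideal (MvPolynomial (Fin s) K) := Ideal.span {p | ∃ i : Fin s, p = X i ^ (a i)} with hI
  have hw : ∀ e : Fin s →₀ ℕ, Finsupp.weight (1 : Fin s → ℕ) e = e.degree := fun e =>
    (DFunLike.congr_fun (Finsupp.degree_eq_weight_one (R := ℕ)) e).symm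
  have hmem : ∀ p : MvPolynomial (Fin s) K, p ∈ I ↔ ∀ e ∈ p.support, ∃ i, a i ≤ e i := by
    intro p
    have : {p : MvPolynomial (Fin s) K | ∃ i : Fin s, p = X i ^ (a i)} =
        (fun e => monomial e (1 : K)) '' (Set.range fun i => Finsupp.single i (a i)) := by
      ext q
      simp [X_pow_eq_monomial, eq_comm]
    rw [hI, this, mem_ideal_span_monomial_image]
    simp
  set S : Set (Fin s →₀ ℕ) := {e | e.degree = d ∧ ∀ i, e i < a i} with hS
  set f := (Ideal.Quotient.mkₐ K I).toLinearMap with hf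
  have hf0 : ∀ p, f p = 0 ↔ p ∈ I := fun p => Ideal.Quotient.eq_zero_iff_mem
  set V := restrictSupport K S with hV
  have hVm : ∀ p, p ∈ V ↔ ∀ e ∈ p.support, e ∈ S := by
    intro p
    rw [hV, mem_restrictSupport_iff]
    rfl
  have hcomp : component s K I d = V.map f := by
    unfold component
    apply le_antisymm
    · rintro _ ⟨p, hp, rfl⟩
      have hp' : p.IsHomogeneous d := hp
      rw [← hf, p.as_sum, map_sum]
      refine Submodule.sum_mem _ fun e he => ?_
      by_cases h : ∀ i, e i < a i
      · refine ⟨_, ?_, rfl⟩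
        rw [SetLike.mem_coe, hVm]
        intro e' he'
        have := support_monomial_subset he'
        rw [Finset.mem_singleton] at this
        subst this
        refine ⟨?_, h⟩
        have := hp' (mem_support_iff.1 he)
        rwa [hw] at this
      · have : f (monomial e (coeff e p)) = 0 := by
          rw [hf0, hmem]
          intro e' he'
          have := support_monomial_subset he'
          rw [Finset.mem_singleton] at this
          subst this
          simpa using h
        rw [this]
        exact zero_mem _
    · rintro _ ⟨p, hp, rfl⟩
      refine ⟨p, ?_, rfl⟩
      rw [SetLike.mem_coe, hVm] at hp
      rw [SetLike.mem_coe, mem_homogeneousSubmodule]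
      intro e he
      rw [hw]
      exact (hp e (mem_support_iff.2 he)).1
  have hinj : Function.Injective (f.domRestrict V) := by
    rw [injective_iff_map_eq_zero]
    rintro ⟨p, hp⟩ h
    rw [LinearMap.domRestrict_apply, hf0, hmem] at h
    rw [hVm] at hp
    ext1
    show p = 0
    rw [← support_eq_empty, Finset.eq_empty_iff_forall_notMem]
    intro e he
    obtain ⟨i, hi⟩ := h e he
    exact absurd ((hp e he).2 i) (by omega)
  unfold hilb
  rw [hcomp, ← LinearMap.range_domRestrict, ← (LinearEquiv.ofInjective _ hinj).finrank_eq,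
    Module.finrank_eq_nat_card_basis (basisRestrictSupport K S)]
  rfl

/-- `1 + X + ... + X^(n-1)` -/
noncomputable def gp (n : ℕ) : Polynomial ℤ := ∑ j ∈ Finset.range n, Polynomial.X ^ j

theorem hilb_coeff {s : ℕ} {K : Type*} [Field K] (a : Fin s → ℕ) (d : ℕ) :
    (hilb s K (Ideal.span {p | ∃ i : Fin s, p = X i ^ (a i)}) d : ℤ) =
      (∏ i, gp (a i)).coeff d := by
  rw [comp_rank]
  unfold gp
  rw [Finset.prod_univ_sum, Polynomial.finsetSum_coeff]
  simp_rw [Finset.prod_pow_eq_pow_sum, Polynomial.coeff_X_pow]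
  rw [Finset.sum_boole]
  congr 1
  rw [← Nat.card_eq_finsetCard]
  refine Nat.card_congr (Finsupp.equivFunOnFinite.subtypeEquiv fun e => ?_)
  simp [Finsupp.degree_eq_sum, and_comm, eq_comm]

/-- coefficients indexed by integers -/
noncomputable def zc (p : Polynomial ℤ) (i : ℤ) : ℤ := if 0 ≤ i then p.coeff i.toNat else 0

theorem zc_nat (p : Polynomial ℤ) (i : ℕ) : zc p i = p.coeff i := by simp [zc]

theorem zc_mul (p : Polynomial ℤ) (n : ℕ) (i : ℤ) :
    zc (p * gp n) i = ∑ j ∈ Finset.range n, zc p (i - j) := by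
  unfold zc gp
  rw [Finset.mul_sum, Polynomial.finsetSum_coeff]
  split_ifs with h
  · refine Finset.sum_congr rfl fun j _ => ?_
    rw [Polynomial.coeff_mul_X_pow']
    by_cases hj : j ≤ i.toNat
    · rw [if_pos hj, if_pos (by omega)]
      congr 1
      omega
    · rw [if_neg hj, if_neg (by omega)]
  · symm
    refine Finset.sum_eq_zero fun j _ => ?_
    rw [if_neg (by omega)]

/-- symmetric and unimodal about `N/2` -/
def SU (p : Polynomial ℤ) (N : ℤ) : Prop :=
  ∀ i j : ℤ, |2 * i - N| ≤ |2 * j - N| → zc p j ≤ zc p i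

theorem SU_one : SU 1 0 := by
  intro i j h
  simp only [zc, Polynomial.coeff_one]
  split_ifs <;> grind

theorem SU_mul {p : Polynomial ℤ} {N : ℤ} (h : SU p N) (n : ℕ) :
    SU (p * gp n) (N + n - 1) := by
  have sym : ∀ i, zc (p * gp n) (N + n - 1 - i) = zc (p * gp n) i := by
    intro i
    rw [zc_mul, zc_mul, ← Finset.sum_range_reflect]
    refine Finset.sum_congr rfl fun j hj => ?_
    have hj := Finset.mem_range.1 hj
    have : ((n - 1 - j : ℕ) : ℤ) = n - 1 - j := by omega
    rw [this]
    apply le_antisymm <;> apply h <;> grind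
  have step : ∀ i : ℤ, 2 * i + 2 ≤ N + n → zc (p * gp n) i ≤ zc (p * gp n) (i + 1) := by
    intro i hi
    rcases Nat.eq_zero_or_pos n with rfl | hn
    · simp [zc_mul]
    have e1 := Finset.sum_range_succ (fun j : ℕ => zc p (i + 1 - j)) n
    have e2 := Finset.sum_range_succ' (fun j : ℕ => zc p (i + 1 - j)) n
    have e3 : ∑ j ∈ Finset.range n, zc p (i + 1 - ((j + 1 : ℕ) : ℤ)) =
        ∑ j ∈ Finset.range n, zc p (i - j) := by
      refine Finset.sum_congr rfl fun j _ => ?_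
      congr 1
      push_cast
      ring
    have := h (i + 1 - (0 : ℕ)) (i + 1 - n) (by push_cast; grind)
    rw [zc_mul, zc_mul]
    linarith
  have mono : ∀ (k : ℕ) (i : ℤ), 2 * (i + k) ≤ N + n →
      zc (p * gp n) i ≤ zc (p * gp n) (i + k) := by
    intro k
    induction k with
    | zero => intro i _; simp
    | succ k ih =>
      intro i hi
      push_cast at hi ⊢
      refine (ih i (by omega)).trans ?_
      rw [← add_assoc]
      exact step _ (by omega)
  have mono' : ∀ i j : ℤ, j ≤ i → 2 * i ≤ N + n → zc (p * gp n) j ≤ zc (p * gp n) i := by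
    intro i j hij hi
    have := mono (i - j).toNat j (by omega)
    rwa [show j + ((i - j).toNat : ℤ) = i by omega] at this
  intro i j hij
  rcases le_total (2 * i) (N + n - 1) with hi | hi <;>
    rcases le_total (2 * j) (N + n - 1) with hj | hj
  · apply mono' <;> grind
  · rw [← sym j]; apply mono' <;> grind
  · rw [← sym i]; apply mono' <;> grind
  · rw [← sym i, ← sym j]; apply mono' <;> grind

theorem SU_pow (n k : ℕ) : SU (gp n ^ k) (k * ((n : ℤ) - 1)) := by
  induction k with
  | zero => simpa using SU_one
  | succ k ih =>
    have := SU_mul ih n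
    rw [pow_succ]
    convert this using 1
    push_cast
    ring

theorem gp_id (s : ℕ) : gp (s + 1) * gp (s + 1) = Polynomial.X * (gp s * gp s) + gp (2 * s + 1) := by
  have h : ∀ n, gp n * (Polynomial.X - 1) = Polynomial.X ^ n - 1 := fun n => geom_sum_mul _ n
  have hne : (Polynomial.X - 1 : Polynomial ℤ) ≠ 0 := Polynomial.X_sub_C_ne_zero (1 : ℤ)
  apply mul_right_cancel₀ hne
  apply mul_right_cancel₀ hne
  have h1 := h (s + 1)
  have h2 := h s
  have h3 := h (2 * s + 1)
  linear_combination (gp (s + 1) * (Polynomial.X - 1) + (Polynomial.X ^ (s+1) - 1)) * h1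
    - Polynomial.X * (gp s * (Polynomial.X - 1) + (Polynomial.X ^ s - 1)) * h2
    - (Polynomial.X - 1) * h3

/-- With `I_s = (x₁^s, …, x_s^s)` and `J_s = (x₁^{s+1}, x₂^{s+1}, x₃^s, …, x_s^s)`,
`h_{R/I_s}(C(s,2)) - h_{R/I_s}(C(s,2)-1) ≤ h_{R/J_s}(C(s,2)+1) - h_{R/J_s}(C(s,2)+2)`
(stated additively to avoid truncated subtraction). -/
theorem stmt_8 {K : Type*} [Field K] (s : ℕ) (hs : 2 ≤ s) :
    letI Is : Ideal (MvPolynomial (Fin s) K) := Ideal.span {p | ∃ i : Fin s, p = X i ^ s}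
    letI Js : Ideal (MvPolynomial (Fin s) K) :=
      Ideal.span {p | ∃ i : Fin s, p = X i ^ (if (i : ℕ) < 2 then s + 1 else s)}
    letI m := Nat.choose s 2
    hilb s K Is m + hilb s K Js (m + 2) ≤ hilb s K Is (m - 1) + hilb s K Js (m + 1) := by
  obtain ⟨k, rfl⟩ : ∃ k, s = k + 2 := ⟨s - 2, by omega⟩
  set Is : Ideal (MvPolynomial (Fin (k + 2)) K) := Ideal.span {p | ∃ i : Fin (k + 2), p = X i ^ (k + 2)} with hIs
  set Js : Ideal (MvPolynomial (Fin (k + 2)) K) :=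
    Ideal.span {p | ∃ i : Fin (k + 2), p = X i ^ (if (i : ℕ) < 2 then k + 2 + 1 else k + 2)} with hJs
  set m := Nat.choose (k + 2) 2 with hmdef
  have hm2 : 2 * (m : ℤ) = (k + 2) * (k + 1) := by
    have : m * 2 = (k + 2) * (k + 1) := by
      have := Nat.choose_two_right (k + 2)
      rw [hmdef]
      rw [this]
      exact Nat.div_mul_cancel (by
        have := (Nat.even_mul_succ_self (k + 1)).two_dvd
        rwa [mul_comm] at this)
    have := congrArg (Nat.cast : ℕ → ℤ) this
    push_cast at this
    linarith
  have hm : 1 ≤ m := Nat.choose_pos (by omega)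
  have hI : ∀ d, (hilb (k + 2) K Is d : ℤ) = (gp (k + 2) ^ (k + 2)).coeff d := by
    intro d
    have := hilb_coeff (K := K) (fun _ : Fin (k + 2) => k + 2) d
    simpa using this
  have hJ : ∀ d, (hilb (k + 2) K Js d : ℤ) =
      (Polynomial.X * gp (k + 2) ^ (k + 2) + gp (k + 2) ^ k * gp (2 * (k + 2) + 1)).coeff d := by
    intro d
    have := hilb_coeff (K := K)
      (fun i : Fin (k + 2) => if (i : ℕ) < 2 then k + 2 + 1 else k + 2) d
    rw [Fin.prod_univ_succ, Fin.prod_univ_succ] at this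
    have e : gp (k + 2 + 1) * (gp (k + 2 + 1) * gp (k + 2) ^ k) =
      Polynomial.X * gp (k + 2) ^ (k + 2) + gp (k + 2) ^ k * gp (2 * (k + 2) + 1) := by
      linear_combination gp (k + 2) ^ k * gp_id (k + 2)
    rw [← e]
    refine this.trans ?_
    simp
  have s1 := SU_pow (k + 2) (k + 2) (m - 1) (m + 1) (by
    push_cast
    rw [show ((k : ℤ) + 2) * (k + 2 - 1) = 2 * m by linarith]
    grind)
  have s2 := SU_pow (k + 2) (k + 2) (m + 1) (m - 1) (by
    push_cast
    rw [show ((k : ℤ) + 2) * (k + 2 - 1) = 2 * m by linarith]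
    grind)
  have s3 := SU_mul (SU_pow (k + 2) k) (2 * (k + 2) + 1) (m + 1) (m + 2) (by
    push_cast
    rw [show (k : ℤ) * (k + 2 - 1) + (2 * (k + 2) + 1) - 1 = 2 * m + 2 by linarith]
    grind)
  have c1 : ((m : ℤ) - 1) = ((m - 1 : ℕ) : ℤ) := by omega
  have c2 : ((m : ℤ) + 1) = ((m + 1 : ℕ) : ℤ) := by omega
  have c3 : ((m : ℤ) + 2) = ((m + 2 : ℕ) : ℤ) := by omega
  rw [c1, c2, zc_nat, zc_nat] at s1 s2
  rw [c2, c3, zc_nat, zc_nat] at s3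
  zify
  rw [hI, hI, hJ, hJ, Polynomial.coeff_add, Polynomial.coeff_add, Polynomial.coeff_X_mul,
    show m + 2 = (m + 1) + 1 from rfl, Polynomial.coeff_X_mul]
  rw [show m + 2 = (m + 1) + 1 from rfl] at s3
  linarith
end

section
/- Let K be any field, r ≥ 3, R = K[x_1,…,x_r], and I_{r,r} = (x_1^r,…,x_r^r, x_1 x_2 ⋯ x_r). Then the level Artinian algebra R/I_{r,r} fails to have the WLP; more precisely, h_{R/I_{r,r}}(binom(r,2) − 1) ≥ h_{R/I_{r,r}}(binom(r,2)), yet for every linear form L the multiplication map ×L : (R/I_{r,r})_{binom(r,2)−1} → (R/I_{r,r})_{binom(r,2)} is not surjective. -/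
open MvPolynomial

/-- Number of compositions of `d` into `n` parts in `[1, r-1]`. -/
def cntN (r : ℕ) : ℕ → ℤ → ℤ
  | 0, d => if d = 0 then 1 else 0
  | n + 1, d => ∑ j ∈ Finset.range (r - 1), cntN r n (d - (j + 1))

lemma cntN_symm (r : ℕ) (hr : 3 ≤ r) (n : ℕ) : ∀ d : ℤ, cntN r n (n * r - d) = cntN r n d := by
  induction n with
  | zero => intro d; simp [cntN]
  | succ n ih =>
    intro d
    simp only [cntN]
    rw [← Finset.sum_range_reflect]
    apply Finset.sum_congr rfl
    intro j hj
    rw [Finset.mem_range] at hj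
    rw [← ih]
    congr 1
    have h : ((r - 1 - 1 - j : ℕ) : ℤ) = r - 2 - j := by omega
    rw [h]; push_cast; ring

lemma cntN_diff (r : ℕ) (hr : 3 ≤ r) (n : ℕ) (d : ℤ) :
    cntN r (n + 1) d - cntN r (n + 1) (d + 1) = cntN r n (d + 1 - r) - cntN r n d := by
  simp only [cntN]
  rw [← Finset.sum_sub_distrib]
  have := Finset.sum_range_sub (fun j : ℕ => cntN r n (d - j)) (r - 1)
  have h : ((r - 1 : ℕ) : ℤ) = r - 1 := by omega
  rw [h] at this
  rw [show d + 1 - (r : ℤ) = d - (r - 1) by ring]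
  simp only [Nat.cast_zero, sub_zero] at this
  rw [← this]
  apply Finset.sum_congr rfl
  intro j _
  congr 2 <;> push_cast <;> ring

lemma chain_le (f : ℤ → ℤ) (c : ℤ) (h : ∀ d, c ≤ 2 * d → f (d + 1) ≤ f d) (d : ℤ) (hd : c ≤ 2 * d)
    (k : ℕ) : f (d + k) ≤ f d := by
  induction k with
  | zero => simp
  | succ k ih =>
    refine le_trans ?_ ih
    have := h (d + k) (by omega)
    rw [show d + ((k + 1 : ℕ) : ℤ) = d + k + 1 by push_cast; ring]
    exact this

lemma cntN_mono (r : ℕ) (hr : 3 ≤ r) (n : ℕ) :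
    ∀ d d' : ℤ, d ≤ d' → n * r ≤ d + d' → cntN r n d' ≤ cntN r n d := by
  have key : (∀ d : ℤ, n * r ≤ 2 * d → cntN r n (d + 1) ≤ cntN r n d) →
      ∀ d d' : ℤ, d ≤ d' → n * r ≤ d + d' → cntN r n d' ≤ cntN r n d := by
    intro h d d' h1 h2
    by_cases hc : (n * r : ℤ) ≤ 2 * d
    · obtain ⟨k, hk⟩ := Int.le.dest h1
      rw [← hk]
      exact chain_le _ _ h d hc k
    · rw [← cntN_symm r hr n d]
      obtain ⟨k, hk⟩ := Int.le.dest (show (n * r - d : ℤ) ≤ d' by linarith)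
      rw [← hk]
      exact chain_le _ _ h _ (by linarith) k
  induction n with
  | zero =>
    apply key
    intro d hd
    simp only [cntN]
    have : 0 ≤ d := by simpa using hd
    rw [if_neg (by omega)]
    split_ifs <;> simp
  | succ n ih =>
    apply key
    intro d hd
    have h1 := cntN_diff r hr n d
    have h2 := ih (by
      intro h d d' h1 h2
      by_cases hc : (n * r : ℤ) ≤ 2 * d
      · obtain ⟨k, hk⟩ := Int.le.dest h1
        rw [← hk]
        exact chain_le _ _ h d hc k
      · rw [← cntN_symm r hr n d]
        obtain ⟨k, hk⟩ := Int.le.dest (show (n * r - d : ℤ) ≤ d' by linarith)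
        rw [← hk]
        exact chain_le _ _ h _ (by linarith) k) (d + 1 - r) d (by omega)
        (by push_cast at hd; linarith)
    linarith

lemma cntN_neg (r : ℕ) (n : ℕ) : ∀ d : ℤ, d < 0 → cntN r n d = 0 := by
  induction n with
  | zero => intro d hd; simp [cntN, hd.ne]
  | succ n ih =>
    intro d hd
    simp only [cntN]
    apply Finset.sum_eq_zero
    intro j _
    apply ih
    omega

lemma cntN_coeff (r : ℕ) (n : ℕ) : ∀ d : ℕ,
    ((∑ j ∈ Finset.range (r - 1), (Polynomial.X : Polynomial ℤ) ^ (j + 1)) ^ n).coeff d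
      = cntN r n d := by
  induction n with
  | zero => intro d; simp [cntN, Polynomial.coeff_one]
  | succ n ih =>
    intro d
    rw [pow_succ, Finset.mul_sum, Polynomial.finsetSum_coeff]
    simp only [cntN]
    apply Finset.sum_congr rfl
    intro j _
    rw [Polynomial.coeff_mul_X_pow']
    split_ifs with h
    · rw [ih]; congr 1; push_cast [h]; ring
    · rw [cntN_neg]; push_cast at *; omega

/-- The standard monomials of degree `d`, as functions. -/
def stdF (r d : ℕ) : Finset (Fin r → ℕ) :=
  (Fintype.piFinset (fun _ : Fin r => Finset.range r)).filter
    (fun b => ∑ i, b i = d ∧ ∃ i, b i = 0)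

lemma card_coeff {r : ℕ} (s : Finset ℕ) (d : ℕ) :
    ((∑ j ∈ s, (Polynomial.X : Polynomial ℤ) ^ j) ^ r).coeff d =
      (((Fintype.piFinset (fun _ : Fin r => s)).filter (fun b => ∑ i, b i = d)).card : ℤ) := by
  have h := Finset.prod_univ_sum (fun _ : Fin r => s) (fun _ j => (Polynomial.X : Polynomial ℤ) ^ j)
  rw [Finset.prod_const, Finset.card_univ, Fintype.card_fin] at h
  rw [h, Polynomial.finsetSum_coeff, Finset.card_filter]
  push_cast
  apply Finset.sum_congr rfl
  intro b _
  rw [Finset.prod_pow_eq_pow_sum, Polynomial.coeff_X_pow]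
  simp [eq_comm]

lemma stdF_card (r d : ℕ) (hr : 3 ≤ r) :
    ((stdF r d).card : ℤ) = ∑ n ∈ Finset.range r, (r.choose n : ℤ) * cntN r n d := by
  set P : Polynomial ℤ := ∑ j ∈ Finset.range (r - 1), (Polynomial.X : Polynomial ℤ) ^ (j + 1) with hP
  have h1 : ∑ j ∈ Finset.range r, (Polynomial.X : Polynomial ℤ) ^ j = P + 1 := by
    obtain ⟨s, rfl⟩ : ∃ s, r = s + 1 := ⟨r - 1, by omega⟩
    rw [Finset.sum_range_succ']; simp [hP]
  have h2 : ∑ j ∈ (Finset.range r).erase 0, (Polynomial.X : Polynomial ℤ) ^ j = P := by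
    have := Finset.add_sum_erase (Finset.range r) (fun j => (Polynomial.X : Polynomial ℤ) ^ j)
      (a := 0) (by simp; omega)
    rw [h1] at this
    simp only [pow_zero] at this
    linear_combination this
  have c1 := card_coeff (r := r) (Finset.range r) d
  have c2 := card_coeff (r := r) ((Finset.range r).erase 0) d
  rw [h1] at c1
  rw [h2] at c2
  have e : ((stdF r d).card : ℤ) = ((P + 1) ^ r).coeff d - (P ^ r).coeff d := by
    rw [c1, c2, eq_sub_iff_add_eq, ← Nat.cast_add]
    rw [← Finset.card_filter_add_card_filter_not (s := (Fintype.piFinset (fun _ : Fin r =>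
      Finset.range r)).filter (fun b => ∑ i, b i = d)) (fun b => ∃ i, b i = 0)]
    congr 3
    · ext b; simp [stdF]; tauto
    · ext b; simp; constructor
      · rintro ⟨h, h'⟩; exact ⟨⟨fun i => (h i).2, h'⟩, fun i => (h i).1⟩
      · rintro ⟨⟨h, h'⟩, h''⟩; exact ⟨fun i => ⟨h'' i, h i⟩, h'⟩
  rw [e, add_pow, Finset.sum_range_succ, Polynomial.coeff_add]
  simp only [one_pow, mul_one, Nat.choose_self, Nat.cast_one, add_sub_cancel_right,
    Polynomial.finsetSum_coeff]
  apply Finset.sum_congr rfl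
  intro n _
  rw [Polynomial.coeff_mul_natCast, hP, cntN_coeff, mul_comm]

lemma stdF_le (r : ℕ) (hr : 3 ≤ r) :
    (stdF r (r.choose 2)).card ≤ (stdF r (r.choose 2 - 1)).card := by
  zify
  rw [stdF_card r _ hr, stdF_card r _ hr]
  obtain ⟨s, rfl⟩ : ∃ s, r = s + 2 := ⟨r - 2, by omega⟩
  set m := (s + 2).choose 2 with hm
  have hm2 : 2 * (m : ℤ) = (s + 2) * (s + 1) := by
    have := Nat.triangle_succ (s + 1)
    have h3 : (s + 2) * (s + 1) = m * 2 := by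
      rw [hm, Nat.choose_two_right]
      exact (Nat.div_mul_cancel (Nat.even_mul_pred_self _).two_dvd).symm
    zify at h3
    linarith
  have hm1 : ((m - 1 : ℕ) : ℤ) = m - 1 := by
    have : 1 ≤ m := Nat.choose_pos (by omega)
    push_cast [this]; rfl
  rw [hm1, Finset.sum_range_succ, Finset.sum_range_succ, Finset.sum_range_succ (n := s + 1),
    Finset.sum_range_succ (n := s)]
  have hA : ∑ n ∈ Finset.range s, ((s + 2).choose n : ℤ) * cntN (s + 2) n m ≤
      ∑ n ∈ Finset.range s, ((s + 2).choose n : ℤ) * cntN (s + 2) n (m - 1) := by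
    apply Finset.sum_le_sum
    intro n hn
    rw [Finset.mem_range] at hn
    apply mul_le_mul_of_nonneg_left _ (by positivity)
    apply cntN_mono _ hr _ _ _ (by omega)
    have : (n : ℤ) ≤ s := by omega
    push_cast
    nlinarith
  have hB := cntN_mono (s + 2) hr s (m - 1) m (by omega) (by push_cast; nlinarith)
  have hC := cntN_diff (s + 2) hr s (m - 1)
  have hD := cntN_symm (s + 2) hr s m
  rw [show ((s : ℤ) * ((s + 2 : ℕ) : ℤ) - m) = m - 1 + 1 - ((s + 2 : ℕ) : ℤ) by
    push_cast; linarith] at hD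
  rw [hD, sub_add_cancel] at hC
  have hE : ((s + 2).choose (s + 1) : ℤ) = s + 2 := by
    rw [Nat.choose_succ_self_right]; push_cast; ring
  have hF : ((s + 2).choose s : ℤ) = m := by
    rw [hm, ← Nat.choose_symm_add]
  rw [hE, hF]
  have hs : (1 : ℤ) ≤ s := by omega
  have hG : (s + 2 : ℤ) ≤ m := by nlinarith
  nlinarith

/-- The exponent vector of a permutation. -/
noncomputable def fsP {r : ℕ} (σ : Equiv.Perm (Fin r)) : Fin r →₀ ℕ :=
  Finsupp.equivFunOnFinite.symm (fun k => (σ k : ℕ))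

lemma fsP_apply {r : ℕ} (σ : Equiv.Perm (Fin r)) (k : Fin r) : fsP σ k = (σ k : ℕ) := rfl

/-- Predecessor in `Fin r`. -/
def prF {r : ℕ} (i : Fin r) : Fin r := ⟨i.val - 1, by omega⟩

lemma degree_one_single {r : ℕ} (b : Fin r →₀ ℕ) (hb : b.degree = 1) :
    ∃ i, b = Finsupp.single i 1 := by
  have h0 : b ≠ 0 := by rintro rfl; simp at hb
  obtain ⟨i, hi⟩ := Finsupp.ne_iff.1 h0
  have hle : Finsupp.single i 1 ≤ b := by
    rw [Finsupp.single_le_iff]; simp at hi; omega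
  obtain ⟨e, rfl⟩ := le_iff_exists_add.1 hle
  rw [map_add, Finsupp.degree_single] at hb
  have : e = 0 := (Finsupp.degree_eq_zero_iff e).1 (by omega)
  exact ⟨i, by simp [this]⟩

lemma linear_form_eq {K : Type*} [Field K] {r : ℕ} (L : MvPolynomial (Fin r) K)
    (hL : L ∈ homogeneousSubmodule (Fin r) K 1) :
    L = ∑ i, C (coeff (Finsupp.single i 1) L) * X i := by
  classical
  rw [mem_homogeneousSubmodule] at hL
  ext b
  rw [coeff_sum]
  simp only [coeff_C_mul, coeff_X']
  by_cases hb : b.degree = 1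
  · obtain ⟨i, rfl⟩ := degree_one_single b hb
    rw [Finset.sum_eq_single i]
    · simp
    · intro j _ hj
      rw [if_neg]; · simp
      intro h
      exact hj (Finsupp.single_left_injective one_ne_zero h)
    · simp
  · rw [hL.coeff_eq_zero (by simpa using hb)]
    symm
    apply Finset.sum_eq_zero
    intro j _
    rw [if_neg]; · simp
    rintro rfl
    simp at hb

lemma exists_order {K : Type*} [Field K] {r : ℕ} (c : Fin r → K) :
    ∃ β : Equiv.Perm (Fin r), ∀ i j, c i ≠ 0 → c j = 0 → β i < β j := by
  classical
  let f : Fin r → ℕ := fun i => if c i = 0 then 1 else 0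
  refine ⟨(Tuple.sort f)⁻¹, fun i j hi hj => ?_⟩
  by_contra h
  push Not at h
  have := Tuple.monotone_sort f h
  simp [f, hi, hj] at this

open Classical in
/-- The weight of an exponent vector. -/
noncomputable def wtF {K : Type*} [Field K] {r : ℕ} (c : Fin r → K) (b : Fin r →₀ ℕ) : K :=
  ∏ k, (if c k = 0 then 1 else (c k)⁻¹) ^ (b k)

lemma wtF_ne {K : Type*} [Field K] {r : ℕ} (c : Fin r → K) (b : Fin r →₀ ℕ) : wtF c b ≠ 0 := by
  unfold wtF
  refine Finset.prod_ne_zero_iff.2 fun k _ => pow_ne_zero _ ?_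
  split_ifs with h
  · exact one_ne_zero
  · exact inv_ne_zero h

lemma wtF_add {K : Type*} [Field K] {r : ℕ} (c : Fin r → K) (b : Fin r →₀ ℕ) (i : Fin r)
    (hi : c i ≠ 0) : c i * wtF c (b + Finsupp.single i 1) = wtF c b := by
  classical
  unfold wtF
  simp only [Finsupp.add_apply, pow_add, Finset.prod_mul_distrib]
  rw [Finset.prod_eq_single i (f := fun k => _ ^ (Finsupp.single i 1 k))]
  · simp [hi]; field_simp
  · intro j _ hj
    simp [Finsupp.single_apply, hj.symm]
  · simp

open Classical in
/-- The twisted alternating functional. -/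
noncomputable def phiF {K : Type*} [Field K] {r : ℕ} (c : Fin r → K) (β : Equiv.Perm (Fin r))
    (p : MvPolynomial (Fin r) K) : K :=
  ∑ σ ∈ Finset.univ.filter (fun σ : Equiv.Perm (Fin r) => ∀ j, c j = 0 → σ j = β j),
    ((Equiv.Perm.sign σ : ℤ) : K) * wtF c (fsP σ) * coeff (fsP σ) p

lemma phiF_sub {K : Type*} [Field K] {r : ℕ} (c : Fin r → K) (β : Equiv.Perm (Fin r))
    (p q : MvPolynomial (Fin r) K) : phiF c β (p - q) = phiF c β p - phiF c β q := by
  simp [phiF, mul_sub]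

lemma fsP_inj {r : ℕ} {σ τ : Equiv.Perm (Fin r)} (h : fsP σ = fsP τ) : σ = τ := by
  ext k
  have := DFunLike.congr_fun h k
  simpa [fsP_apply] using this

lemma phiF_base {K : Type*} [Field K] {r : ℕ} (c : Fin r → K) (β : Equiv.Perm (Fin r)) :
    phiF c β (monomial (fsP β) 1) ≠ 0 := by
  classical
  unfold phiF
  rw [Finset.sum_eq_single β]
  · rw [coeff_monomial, if_pos rfl, mul_one]
    refine mul_ne_zero ?_ (wtF_ne _ _)
    rcases Int.units_eq_one_or (Equiv.Perm.sign β) with h | h <;> simp [h]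
  · intro σ _ hσ
    rw [coeff_monomial, if_neg, mul_zero]
    intro h
    exact hσ (fsP_inj h).symm
  · intro h
    simp at h

lemma phiF_mul {K : Type*} [Field K] {r : ℕ} (c : Fin r → K) (β : Equiv.Perm (Fin r))
    (hβ : ∀ i j, c i ≠ 0 → c j = 0 → β i < β j) (p : MvPolynomial (Fin r) K) :
    phiF c β ((∑ i, C (c i) * X i) * p) = 0 := by
  classical
  set S : Finset (Fin r × Equiv.Perm (Fin r)) := Finset.univ.filter
    (fun x => (∀ j, c j = 0 → x.2 j = β j) ∧ c x.1 ≠ 0 ∧ (x.2 x.1 : ℕ) ≠ 0) with hS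
  set f : Fin r × Equiv.Perm (Fin r) → K := fun x =>
    ((Equiv.Perm.sign x.2 : ℤ) : K) * wtF c (fsP x.2) * (c x.1 * coeff (fsP x.2) (X x.1 * p)) with hf
  have h1 : phiF c β ((∑ i, C (c i) * X i) * p) = ∑ x ∈ S, f x := by
    unfold phiF
    simp only [Finset.sum_mul, coeff_sum, mul_assoc, coeff_C_mul, Finset.mul_sum]
    rw [Finset.sum_filter, hS, Finset.sum_filter, Fintype.sum_prod_type, Finset.sum_comm]
    apply Finset.sum_congr rfl
    intro σ _
    split_ifs with h
    · apply Finset.sum_congr rfl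
      intro i _
      split_ifs with h'
      · simp only [hf, mul_assoc]
      · by_cases hc : c i = 0
        · simp [hc]
        · have : (σ i : ℕ) = 0 := by
            by_contra h0; exact h' ⟨h, hc, h0⟩
          rw [coeff_X_mul', if_neg]; · simp
          simp [fsP_apply, this]
    · symm
      apply Finset.sum_eq_zero
      intro i _
      rw [if_neg]; tauto
  rw [h1]
  set g : Fin r × Equiv.Perm (Fin r) → Fin r × Equiv.Perm (Fin r) := fun x =>
    (x.2.symm (prF (x.2 x.1)), x.2 * Equiv.swap x.1 (x.2.symm (prF (x.2 x.1)))) with hg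
  -- basic facts
  have facts : ∀ x ∈ S, ∃ j, g x = (j, x.2 * Equiv.swap x.1 j) ∧ j ≠ x.1 ∧
      (x.2 j : ℕ) + 1 = x.2 x.1 ∧ c j ≠ 0 := by
    rintro ⟨i, σ⟩ hx
    simp only [hS, Finset.mem_filter, Finset.mem_univ, true_and] at hx
    obtain ⟨ha, hb, h0⟩ := hx
    have hj : ((σ (σ.symm (prF (σ i))) : Fin r) : ℕ) + 1 = σ i := by
      simp [prF]; omega
    refine ⟨σ.symm (prF (σ i)), rfl, ?_, hj, ?_⟩
    · intro h
      simp only at h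
      rw [h] at hj; omega
    · set j := σ.symm (prF (σ i))
      intro hcj
      have hk : c (β.symm (σ i)) ≠ 0 := by
        intro hk
        have := ha _ hk
        rw [Equiv.apply_symm_apply] at this
        rw [σ.injective this] at hk
        exact hb hk
      have := hβ _ j hk hcj
      rw [Equiv.apply_symm_apply, ← ha j hcj, Fin.lt_def] at this
      omega
  have gmem : ∀ x ∈ S, g x ∈ S := by
    intro x hx
    obtain ⟨j, hgx, hne, hj, hcj⟩ := facts x hx
    rw [hgx]
    simp only [hS, Finset.mem_filter, Finset.mem_univ, true_and] at hx ⊢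
    refine ⟨?_, hcj, ?_⟩
    · intro k hk
      rw [Equiv.Perm.mul_apply, Equiv.swap_apply_of_ne_of_ne]
      · exact hx.1 k hk
      · rintro rfl; exact hx.2.1 hk
      · rintro rfl; exact hcj hk
    · simpa using hx.2.2
  refine Finset.sum_involution (fun x _ => g x) ?_ ?_ (fun x hx => gmem x hx) ?_
  · intro x hx
    obtain ⟨j, hgx, hne, hj, hcj⟩ := facts x hx
    rw [hgx]
    obtain ⟨i, σ⟩ := x
    simp only [hS, Finset.mem_filter, Finset.mem_univ, true_and] at hx hne hj ⊢
    set e : Fin r →₀ ℕ := fsP σ - Finsupp.single i 1 with he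
    have e1 : fsP σ = e + Finsupp.single i 1 := by
      ext k
      simp only [he, Finsupp.add_apply, Finsupp.tsub_apply, fsP_apply, Finsupp.single_apply]
      split_ifs with h
      · subst h; omega
      · simp
    have e2 : fsP (σ * Equiv.swap i j) = e + Finsupp.single j 1 := by
      ext k
      simp only [he, Finsupp.add_apply, Finsupp.tsub_apply, fsP_apply, Finsupp.single_apply,
        Equiv.Perm.mul_apply]
      by_cases hki : k = i
      · subst hki; simp [hne]; omega
      · by_cases hkj : k = j
        · subst hkj; simp [hne.symm]; omega
        · rw [Equiv.swap_apply_of_ne_of_ne hki hkj]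
          simp [Ne.symm hki, Ne.symm hkj]
    simp only [hf]
    rw [e2, e1, add_comm e, coeff_X_mul, add_comm e, coeff_X_mul, add_comm _ e, add_comm _ e]
    rw [Equiv.Perm.sign_mul, Equiv.Perm.sign_swap hne.symm]
    have w1 := wtF_add c e i hx.2.1
    have w2 := wtF_add c e j hcj
    push_cast
    linear_combination (((Equiv.Perm.sign σ : ℤ) : K) * coeff e p) * (w1 - w2)
  · intro x hx _ h
    obtain ⟨j, hgx, hne, hj, hcj⟩ := facts x hx
    rw [hgx] at h
    exact hne (congrArg Prod.fst h)
  · intro x hx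
    obtain ⟨j, hgx, hne, hj, hcj⟩ := facts x hx
    obtain ⟨j', hgx', hne', hj', hcj'⟩ := facts (g x) (gmem x hx)
    rw [hgx'] 
    rw [hgx] at hj' ⊢
    obtain ⟨i, σ⟩ := x
    simp only [Equiv.Perm.mul_apply, Equiv.swap_apply_right] at hj' hj ⊢
    have : Equiv.swap i j j' = j := by
      apply σ.injective; ext; omega
    have hji : j' = i := by
      rw [← Equiv.swap_apply_right i j] at this
      have h2 : Equiv.swap i j j' = Equiv.swap i j i := by simpa using this
      exact (Equiv.swap i j).injective h2
    subst hji
    ext1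
    · rfl
    · simp [mul_assoc, Equiv.swap_comm j j']

/-- Minimal exponents. -/
def gensS (r : ℕ) : Set (Fin r →₀ ℕ) :=
  {b | ∃ i : Fin r, b = Finsupp.single i r} ∪ {Finsupp.equivFunOnFinite.symm (fun _ => 1)}

lemma span_eq {K : Type*} [Field K] (r : ℕ) :
    Ideal.span ({p | ∃ i : Fin r, p = (X i : MvPolynomial (Fin r) K) ^ r} ∪ {∏ i : Fin r, X i}) =
      Ideal.span ((fun s => monomial s (1 : K)) '' gensS r) := by
  congr 1
  rw [gensS, Set.image_union, Set.image_singleton]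
  congr 1
  · ext p
    simp only [Set.mem_setOf_eq, Set.mem_image]
    constructor
    · rintro ⟨i, rfl⟩; exact ⟨_, ⟨i, rfl⟩, by rw [X_pow_eq_monomial]⟩
    · rintro ⟨_, ⟨i, rfl⟩, rfl⟩; exact ⟨i, by rw [X_pow_eq_monomial]⟩
  · rw [Set.singleton_eq_singleton_iff, monomial_eq, Finsupp.prod_fintype _ _ (by simp)]
    simp

lemma mem_I_iff {K : Type*} [Field K] (r : ℕ) (p : MvPolynomial (Fin r) K) :
    p ∈ Ideal.span ({p | ∃ i : Fin r, p = (X i : MvPolynomial (Fin r) K) ^ r} ∪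
      {∏ i : Fin r, X i}) ↔ ∀ b ∈ p.support, ¬ ((∀ i, b i < r) ∧ ∃ i, b i = 0) := by
  rw [span_eq, mem_ideal_span_monomial_image]
  refine forall₂_congr fun b _ => ?_
  constructor
  · rintro ⟨s, ⟨i, rfl⟩ | rfl, hs⟩ ⟨h1, j, hj⟩
    · have := hs i
      have := h1 i
      simp at *; omega
    · have := hs j
      simp [hj] at this
  · intro h
    by_cases h1 : ∀ i, b i < r
    · refine ⟨_, Or.inr rfl, fun i => ?_⟩
      have : b i ≠ 0 := fun h0 => h ⟨h1, i, h0⟩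
      simp; omega
    · push Not at h1
      obtain ⟨i, hi⟩ := h1
      exact ⟨_, Or.inl ⟨i, rfl⟩, by rwa [Finsupp.single_le_iff]⟩

/-- Standard monomials of degree `d`. -/
def stdS (r d : ℕ) : Set (Fin r →₀ ℕ) :=
  {b | b.degree = d ∧ (∀ i, b i < r) ∧ ∃ i, b i = 0}

noncomputable def stdEquiv (r d : ℕ) : stdS r d ≃ stdF r d :=
  Equiv.subtypeEquiv Finsupp.equivFunOnFinite (by
    intro b
    simp only [stdS, stdF, Set.mem_setOf_eq, Finset.mem_filter, Fintype.mem_piFinset,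
      Finset.mem_range, Finsupp.degree_eq_sum, Finsupp.equivFunOnFinite_apply]
    tauto)

lemma component_equiv {K : Type*} [Field K] (r d : ℕ) :
    Nonempty (restrictSupport K (stdS r d) ≃ₗ[K]
      component r K (Ideal.span ({p | ∃ i : Fin r, p = (X i : MvPolynomial (Fin r) K) ^ r} ∪
      {∏ i : Fin r, X i})) d) := by
  classical
  set I := Ideal.span ({p | ∃ i : Fin r, p = (X i : MvPolynomial (Fin r) K) ^ r} ∪
      {∏ i : Fin r, X i}) with hI
  have hcomp : component r K I d =
      (restrictSupport K (stdS r d)).map (Ideal.Quotient.mkₐ K I).toLinearMap := by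
    unfold component
    apply le_antisymm
    · rintro _ ⟨p, hp, rfl⟩
      rw [SetLike.mem_coe, mem_homogeneousSubmodule] at hp
      refine ⟨∑ b ∈ p.support.filter (fun b => b ∈ stdS r d), monomial b (coeff b p), ?_, ?_⟩
      · apply Submodule.sum_mem
        intro b hb
        rw [monomial_mem_restrictSupport]
        exact Or.inl (Finset.mem_filter.1 hb).2
      · symm
        change Ideal.Quotient.mk I _ = Ideal.Quotient.mk I _
        rw [Ideal.Quotient.eq, hI, mem_I_iff]
        intro b hb h
        rw [mem_support_iff, coeff_sub, coeff_sum] at hb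
        apply hb
        simp only [coeff_monomial]
        rw [Finset.sum_ite_eq']
        split_ifs with h2
        · simp
        · rw [sub_zero]
          by_contra h3
          apply h2
          rw [Finset.mem_filter, mem_support_iff]
          refine ⟨h3, ?_, h⟩
          by_contra h4
          exact h3 (hp.coeff_eq_zero h4)
    · apply Submodule.map_mono
      intro p hp
      rw [mem_restrictSupport_iff] at hp
      rw [mem_homogeneousSubmodule]
      intro b hb
      have := (hp (Finset.mem_coe.2 (mem_support_iff.2 hb))).1
      rw [← this]
      rw [Finsupp.degree_eq_weight_one]
      rfl
  rw [hcomp]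
  refine ⟨?_⟩
  let f := (Ideal.Quotient.mkₐ K I).toLinearMap.submoduleMap (restrictSupport K (stdS r d))
  refine LinearEquiv.ofBijective f ⟨?_, LinearMap.submoduleMap_surjective _ _⟩
  rw [injective_iff_map_eq_zero]
  rintro ⟨p, hp⟩ h
  have h' : Ideal.Quotient.mk I p = 0 := congrArg Subtype.val h
  rw [Ideal.Quotient.eq_zero_iff_mem, hI, mem_I_iff] at h'
  rw [mem_restrictSupport_iff] at hp
  ext1
  by_contra h0
  obtain ⟨b, hb⟩ := Finset.nonempty_iff_ne_empty.2 (fun h => h0 (support_eq_empty.1 h))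
  exact h' b hb (hp hb).2

lemma hilb_eq {K : Type*} [Field K] (r d : ℕ) :
    hilb r K (Ideal.span ({p | ∃ i : Fin r, p = (X i : MvPolynomial (Fin r) K) ^ r} ∪
      {∏ i : Fin r, X i})) d = (stdF r d).card := by
  obtain ⟨e⟩ := component_equiv (K := K) r d
  rw [hilb, ← e.finrank_eq, Module.finrank_eq_nat_card_basis (basisRestrictSupport K _),
    Nat.card_congr (stdEquiv r d)]
  simp

lemma comp_finite {K : Type*} [Field K] (r d : ℕ) :
    Module.Finite K (component r K (Ideal.span
      ({p | ∃ i : Fin r, p = (X i : MvPolynomial (Fin r) K) ^ r} ∪ {∏ i : Fin r, X i})) d) := by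
  obtain ⟨e⟩ := component_equiv (K := K) r d
  have : Finite (stdS r d) := Finite.of_equiv _ (stdEquiv r d).symm
  have := Module.Finite.of_basis (basisRestrictSupport K (stdS r d))
  exact Module.Finite.equiv e

lemma fsP_degree {r : ℕ} (σ : Equiv.Perm (Fin r)) : (fsP σ).degree = r.choose 2 := by
  rw [Finsupp.degree_eq_sum]
  simp only [fsP_apply]
  rw [Equiv.sum_comp σ (fun i : Fin r => (i : ℕ)), Fin.sum_univ_eq_sum_range (fun i => i) r,
    Finset.sum_range_id, Nat.choose_two_right]

lemma not_surj {K : Type*} [Field K] (r : ℕ) (hr : 3 ≤ r) (L : MvPolynomial (Fin r) K)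
    (hL : L ∈ homogeneousSubmodule (Fin r) K 1) :
    ¬ mulMapSurj r K (Ideal.span
      ({p | ∃ i : Fin r, p = (X i : MvPolynomial (Fin r) K) ^ r} ∪ {∏ i : Fin r, X i})) L
      (r.choose 2 - 1) := by
  classical
  set I := Ideal.span ({p | ∃ i : Fin r, p = (X i : MvPolynomial (Fin r) K) ^ r} ∪
      {∏ i : Fin r, X i}) with hI
  intro hs
  have hm : r.choose 2 - 1 + 1 = r.choose 2 := Nat.sub_add_cancel (Nat.choose_pos (by omega))
  set c : Fin r → K := fun i => coeff (Finsupp.single i 1) L with hc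
  obtain ⟨β, hβ⟩ := exists_order c
  obtain ⟨a, ⟨p, hp, rfl⟩, h⟩ := hs (Ideal.Quotient.mk I (monomial (fsP β) 1)) (by
    refine ⟨monomial (fsP β) 1, ?_, rfl⟩
    rw [hm, SetLike.mem_coe, mem_homogeneousSubmodule]
    exact isHomogeneous_monomial _ (fsP_degree β))
  change Ideal.Quotient.mk I L * Ideal.Quotient.mk I p = _ at h
  rw [← map_mul, Ideal.Quotient.eq, hI, mem_I_iff] at h
  have h0 : phiF c β (L * p - monomial (fsP β) 1) = 0 := by
    unfold phiF
    apply Finset.sum_eq_zero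
    intro σ _
    by_contra hne
    refine h (fsP σ) (mem_support_iff.2 (right_ne_zero_of_mul hne)) ⟨fun i => ?_, ?_⟩
    · rw [fsP_apply]; exact (σ i).2
    · exact ⟨σ.symm ⟨0, by omega⟩, by simp [fsP_apply]⟩
  have hLe := linear_form_eq L hL
  rw [phiF_sub, hLe, phiF_mul c β hβ p, zero_sub, neg_eq_zero] at h0
  exact phiF_base c β h0

lemma surj_of_inj {K : Type*} [Field K] (r d : ℕ) (I : Ideal (MvPolynomial (Fin r) K))
    (L : MvPolynomial (Fin r) K) (hL : L ∈ homogeneousSubmodule (Fin r) K 1)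
    (hfin : Module.Finite K (component r K I (d + 1)))
    (hle : hilb r K I (d + 1) ≤ hilb r K I d) (hinj : mulMapInj r K I L d) :
    mulMapSurj r K I L d := by
  let f : (MvPolynomial (Fin r) K ⧸ I) →ₗ[K] (MvPolynomial (Fin r) K ⧸ I) :=
    LinearMap.mulLeft K (Ideal.Quotient.mk I L)
  have h1 : (component r K I d).map f ≤ component r K I (d + 1) := by
    rintro _ ⟨_, ⟨p, hp, rfl⟩, rfl⟩
    refine ⟨L * p, ?_, by simp [f]⟩
    rw [SetLike.mem_coe, mem_homogeneousSubmodule] at *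
    rw [add_comm]
    exact hL.mul hp
  have h2 : Module.finrank K ((component r K I d).map f) = hilb r K I d := by
    let g := f.submoduleMap (component r K I d)
    refine (LinearEquiv.finrank_eq (LinearEquiv.ofBijective g
      ⟨?_, LinearMap.submoduleMap_surjective _ _⟩)).symm
    rw [injective_iff_map_eq_zero]
    rintro ⟨a, ha⟩ h
    ext1
    exact hinj a ha (congrArg Subtype.val h)
  have h3 := Submodule.eq_of_le_of_finrank_le h1 (by rw [h2]; exact hle)
  intro b hb
  rw [← h3] at hb
  obtain ⟨a, ha, rfl⟩ := hb
  exact ⟨a, ha, rfl⟩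

/-- `R/(x₁^r, …, xᵣ^r, x₁⋯xᵣ)` fails to have the WLP; more precisely its Hilbert
function is non-increasing from degree `C(r,2)-1` to degree `C(r,2)`, yet for every
linear form `L` the multiplication map between these degrees is not surjective. -/
theorem stmt_9 {K : Type*} [Field K] (r : ℕ) (hr : 3 ≤ r) :
    letI Irr : Ideal (MvPolynomial (Fin r) K) :=
      Ideal.span ({p | ∃ i : Fin r, p = X i ^ r} ∪ {∏ i : Fin r, X i})
    letI m := Nat.choose r 2
    ¬ hasWLP r K Irr ∧
    hilb r K Irr m ≤ hilb r K Irr (m - 1) ∧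
    ∀ L ∈ MvPolynomial.homogeneousSubmodule (Fin r) K 1, ¬ mulMapSurj r K Irr L (m - 1) := by
  have hle : hilb r K (Ideal.span ({p | ∃ i : Fin r, p = (X i : MvPolynomial (Fin r) K) ^ r} ∪
      {∏ i : Fin r, X i})) (r.choose 2) ≤ hilb r K (Ideal.span
      ({p | ∃ i : Fin r, p = (X i : MvPolynomial (Fin r) K) ^ r} ∪ {∏ i : Fin r, X i}))
      (r.choose 2 - 1) := by
    rw [hilb_eq, hilb_eq]; exact stdF_le r hr
  refine ⟨?_, hle, fun L hL => not_surj r hr L hL⟩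
  rintro ⟨L, hL, h⟩
  have hm : r.choose 2 - 1 + 1 = r.choose 2 := Nat.sub_add_cancel (Nat.choose_pos (by omega))
  rcases h (r.choose 2 - 1) with h | h
  · exact not_surj r hr L hL (surj_of_inj r _ _ L hL (comp_finite r _) (by rwa [hm]) h)
  · exact not_surj r hr L hL h
end

section
/- Let K be a field, r ≥ 3, R = K[x_1,…,x_r], I_{r,r} = (x_1^r,…,x_r^r, x_1 x_2 ⋯ x_r), and 𝔍_r = (x_1^r,…,x_r^r, x_1 x_2 ⋯ x_{r−1}·(x_1 + x_r)). Then R/𝔍_r and R/I_{r,r} have the same Hilbert function, i.e. dim_K (R/𝔍_r)_j = dim_K (R/I_{r,r})_j for all j. -/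
open MvPolynomial

namespace Stmt10

variable {K : Type*} [Field K]

lemma finrank_map_eq_of_ker {V W W' : Type*} [AddCommGroup V] [Module K V]
    [AddCommGroup W] [Module K W] [AddCommGroup W'] [Module K W']
    (f : V →ₗ[K] W) (g : V →ₗ[K] W') (h : ∀ x, f x = 0 ↔ g x = 0) (H : Submodule K V) :
    Module.finrank K (H.map f) = Module.finrank K (H.map g) := by
  have hk : LinearMap.ker (f.domRestrict H) = LinearMap.ker (g.domRestrict H) := by
    ext x; simpa using h x
  rw [← LinearMap.range_domRestrict, ← LinearMap.range_domRestrict]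
  exact ((f.domRestrict H).quotKerEquivRange.symm.trans
    ((Submodule.quotEquivOfEq _ _ hk).trans (g.domRestrict H).quotKerEquivRange)).finrank_eq

lemma span_le_of_monomial {r : ℕ} (S : Set (MvPolynomial (Fin r) K))
    (W : Submodule K (MvPolynomial (Fin r) K))
    (h : ∀ s ∈ S, ∀ u : Fin r →₀ ℕ, monomial u (1 : K) * s ∈ W) :
    ∀ p ∈ Ideal.span S, p ∈ W := by
  have key : ∀ s ∈ S, ∀ q : MvPolynomial (Fin r) K, q * s ∈ W := by
    intro s hs q
    induction q using MvPolynomial.induction_on' with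
    | monomial u c =>
      have : monomial u c * s = c • (monomial u (1 : K) * s) := by
        rw [← smul_mul_assoc, smul_monomial, smul_eq_mul, mul_one]
      rw [this]
      exact W.smul_mem _ (h s hs u)
    | add p q hp hq => rw [add_mul]; exact W.add_mem hp hq
  intro p hp
  refine Submodule.span_induction (p := fun x _ => ∀ q : MvPolynomial (Fin r) K, q * x ∈ W)
    ?_ ?_ ?_ ?_ hp |> fun t => by simpa using t 1
  · intro x hx q; exact key x hx q
  · intro q; simp
  · intro x y _ _ hx hy q; rw [mul_add]; exact W.add_mem (hx q) (hy q)
  · intro c x _ hx q; rw [smul_eq_mul, ← mul_assoc]; exact hx _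

def box {r : ℕ} (u : Fin r →₀ ℕ) : Prop := ∀ i, 1 ≤ u i ∧ u i < r

noncomputable def shift {r : ℕ} (a b : Fin r) (u : Fin r →₀ ℕ) : Fin r →₀ ℕ :=
  u - Finsupp.single b 1 + Finsupp.single a 1

open Classical in
noncomputable def N (K : Type*) [Field K] {r : ℕ} (a b : Fin r) :
    MvPolynomial (Fin r) K →ₗ[K] MvPolynomial (Fin r) K :=
  (basisMonomials (Fin r) K).constr K
    (fun u => if box u then monomial (shift a b u) (1 : K) else 0)

lemma N_box {r : ℕ} (a b : Fin r) {u : Fin r →₀ ℕ} (h : box u) :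
    N K a b (monomial u 1) = monomial (shift a b u) 1 := by
  have := (basisMonomials (Fin r) K).constr_basis K
    (fun u => by classical exact if box u then monomial (shift a b u) (1 : K) else 0) u
  rw [coe_basisMonomials] at this
  unfold N
  rw [this, if_pos h]

lemma N_not {r : ℕ} (a b : Fin r) {u : Fin r →₀ ℕ} (h : ¬ box u) :
    N K a b (monomial u 1) = 0 := by
  have := (basisMonomials (Fin r) K).constr_basis K
    (fun u => by classical exact if box u then monomial (shift a b u) (1 : K) else 0) u
  rw [coe_basisMonomials] at this
  unfold N
  rw [this, if_neg h]

lemma shift_a {r : ℕ} {a b : Fin r} (hab : a ≠ b) (u : Fin r →₀ ℕ) :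
    shift a b u a = u a + 1 := by
  simp [shift, hab.symm]

lemma shift_b {r : ℕ} {a b : Fin r} (hab : a ≠ b) (u : Fin r →₀ ℕ) :
    shift a b u b = u b - 1 := by
  simp [shift, hab]

lemma shift_ge {r : ℕ} {a b i : Fin r} (hi : i ≠ b) (u : Fin r →₀ ℕ) :
    u i ≤ shift a b u i := by
  simp [shift, hi.symm]

lemma N_pow {r : ℕ} {a b : Fin r} (hab : a ≠ b) (k : ℕ) : ∀ u : Fin r →₀ ℕ, r ≤ u a + k →
    (N K a b ^ (k + 1)) (monomial u 1) = 0 := by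
  induction k with
  | zero =>
    intro u hu
    rw [zero_add, pow_one]
    exact N_not a b (fun h => by have := (h a).2; omega)
  | succ k ih =>
    intro u hu
    rw [pow_succ, Module.End.mul_apply]
    by_cases h : box u
    · rw [N_box a b h]
      exact ih _ (by rw [shift_a hab]; omega)
    · rw [N_not a b h, map_zero]

lemma N_nilp {r : ℕ} {a b : Fin r} (hab : a ≠ b) : IsNilpotent (N K a b) := by
  refine ⟨r + 1, (basisMonomials (Fin r) K).ext fun u => ?_⟩
  rw [coe_basisMonomials]
  exact N_pow hab r u (by omega)

noncomputable def T (K : Type*) [Field K] {r : ℕ} (a b : Fin r) :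
    MvPolynomial (Fin r) K →ₗ[K] MvPolynomial (Fin r) K := 1 + N K a b

lemma T_bij {r : ℕ} {a b : Fin r} (hab : a ≠ b) : Function.Bijective (T K a b) :=
  (Module.End.isUnit_iff _).1 (N_nilp hab).isUnit_one_add

lemma T_box {r : ℕ} (a b : Fin r) {u : Fin r →₀ ℕ} (h : box u) :
    T K a b (monomial u 1) = monomial u 1 + monomial (shift a b u) 1 := by
  simp [T, N_box a b h]

lemma T_not {r : ℕ} (a b : Fin r) {u : Fin r →₀ ℕ} (h : ¬ box u) :
    T K a b (monomial u 1) = monomial u 1 := by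
  simp [T, N_not a b h]

lemma shift_add {r : ℕ} {a b : Fin r} {u : Fin r →₀ ℕ} (h : box u) :
    shift a b u + Finsupp.single b 1 = u + Finsupp.single a 1 := by
  have : Finsupp.single b 1 ≤ u := by
    rw [Finsupp.single_le_iff]; exact (h b).1
  rw [shift, add_right_comm, tsub_add_cancel_of_le this]

lemma T_hom {r : ℕ} (a b : Fin r) (u : Fin r →₀ ℕ) :
    (T K a b (monomial u 1)).IsHomogeneous u.degree := by
  by_cases h : box u
  · rw [T_box a b h]
    refine (isHomogeneous_monomial _ rfl).add (isHomogeneous_monomial _ ?_)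
    have := congrArg Finsupp.degree (shift_add (a := a) (b := b) h)
    simpa using this
  · rw [T_not a b h]
    exact isHomogeneous_monomial _ rfl

lemma T_comm {r : ℕ} (a b : Fin r) (d : ℕ) :
    (homogeneousComponent d).comp (T K a b) = (T K a b).comp (homogeneousComponent d) := by
  refine (basisMonomials (Fin r) K).ext fun u => ?_
  rw [coe_basisMonomials]
  simp only [LinearMap.comp_apply]
  rw [homogeneousComponent_of_mem (T_hom a b u),
    homogeneousComponent_of_mem (isHomogeneous_monomial (1 : K) (rfl : u.degree = u.degree))]
  split_ifs <;> simp

lemma T_map {r : ℕ} {a b : Fin r} (hab : a ≠ b) (d : ℕ) :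
    (homogeneousSubmodule (Fin r) K d).map (T K a b) = homogeneousSubmodule (Fin r) K d := by
  have hc : ∀ p, homogeneousComponent d (T K a b p) = T K a b (homogeneousComponent d p) :=
    fun p => LinearMap.congr_fun (T_comm a b d) p
  apply le_antisymm
  · rintro _ ⟨p, hp, rfl⟩
    have h1 : homogeneousComponent d p = p := by
      rw [homogeneousComponent_of_mem hp, if_pos rfl]
    have h2 := hc p
    rw [h1] at h2
    rw [← h2]
    exact homogeneousComponent_mem d _
  · intro q hq
    obtain ⟨p, rfl⟩ := (T_bij hab).2 q
    refine ⟨homogeneousComponent d p, homogeneousComponent_mem d _, ?_⟩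
    rw [← hc, homogeneousComponent_of_mem hq, if_pos rfl]

lemma monomial_mem_of_le {r : ℕ} {I : Ideal (MvPolynomial (Fin r) K)} {u v : Fin r →₀ ℕ}
    (h : v ≤ u) (hv : monomial v (1 : K) ∈ I) : monomial u (1 : K) ∈ I := by
  have : monomial u (1 : K) = monomial (u - v) 1 * monomial v 1 := by
    rw [monomial_mul, mul_one, tsub_add_cancel_of_le h]
  rw [this]
  exact I.mul_mem_left _ hv

lemma X_pow_mem {r : ℕ} {I : Ideal (MvPolynomial (Fin r) K)} (hI : ∀ i, X i ^ r ∈ I)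
    {u : Fin r →₀ ℕ} {i : Fin r} (h : r ≤ u i) : monomial u (1 : K) ∈ I := by
  refine monomial_mem_of_le (v := Finsupp.single i r) (by simpa using h) ?_
  rw [← X_pow_eq_monomial]; exact hI i

/-- exponent of the product over all variables in `s` -/
noncomputable def one {r : ℕ} (s : Finset (Fin r)) : Fin r →₀ ℕ := ∑ i ∈ s, Finsupp.single i 1

lemma one_apply {r : ℕ} (s : Finset (Fin r)) (i : Fin r) :
    one s i = if i ∈ s then 1 else 0 := by
  classical
  simp [one, Finsupp.finsetSum_apply, Finsupp.single_apply]

lemma prod_X {r : ℕ} (s : Finset (Fin r)) :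
    (∏ i ∈ s, X i : MvPolynomial (Fin r) K) = monomial (one s) 1 := by
  rw [one, monomial_sum_one]; rfl

lemma main {r : ℕ} {a b : Fin r} (hab : a ≠ b) (s : Finset (Fin r)) (hs : ∀ i, i ∈ s ↔ i ≠ b)
    (j : ℕ) :
    hilb r K (Ideal.span ({p | ∃ i : Fin r, p = X i ^ r} ∪ {(∏ i ∈ s, X i) * (X a + X b)})) j =
    hilb r K (Ideal.span ({p | ∃ i : Fin r, p = X i ^ r} ∪ {∏ i : Fin r, X i})) j := by
  set J : Ideal (MvPolynomial (Fin r) K) :=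
    Ideal.span ({p | ∃ i : Fin r, p = X i ^ r} ∪ {(∏ i ∈ s, X i) * (X a + X b)}) with hJ
  set I : Ideal (MvPolynomial (Fin r) K) :=
    Ideal.span ({p | ∃ i : Fin r, p = X i ^ r} ∪ {∏ i : Fin r, X i}) with hI
  have hXJ : ∀ i, X i ^ r ∈ J := fun i => Ideal.subset_span (Or.inl ⟨i, rfl⟩)
  have hXI : ∀ i, X i ^ r ∈ I := fun i => Ideal.subset_span (Or.inl ⟨i, rfl⟩)
  have hfJ : (∏ i ∈ s, X i) * (X a + X b) ∈ J := Ideal.subset_span (Or.inr rfl)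
  have hmI : monomial (one Finset.univ) (1 : K) ∈ I := by
    rw [← prod_X]; exact Ideal.subset_span (Or.inr rfl)
  have hboxI : ∀ u : Fin r →₀ ℕ, (∀ i, 1 ≤ u i) → monomial u (1 : K) ∈ I := by
    intro u hu
    refine monomial_mem_of_le (fun i => ?_) hmI
    rw [one_apply]; simpa using hu i
  -- T maps box monomials to multiples of f
  have hboxJ : ∀ u : Fin r →₀ ℕ, box u → T K a b (monomial u 1) ∈ J := by
    intro u hu
    rw [T_box a b hu]
    have hle : one s + Finsupp.single b 1 ≤ u := by
      intro i
      rw [Finsupp.add_apply, one_apply]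
      have := (hu i).1
      by_cases hi : i = b
      · subst hi; simpa [hs] using this
      · simpa [hs, hi, Finsupp.single_apply, Ne.symm hi] using this
    obtain ⟨w, rfl⟩ := exists_add_of_le hle
    have h2 : shift a b (one s + Finsupp.single b 1 + w) = w + one s + Finsupp.single a 1 := by
      apply add_right_cancel (b := Finsupp.single b 1)
      rw [shift_add hu]; abel
    have h3 : monomial (one s + Finsupp.single b 1 + w) (1 : K) +
        monomial (w + one s + Finsupp.single a 1) 1 =
        monomial w 1 * ((∏ i ∈ s, X i) * (X a + X b)) := by
      rw [prod_X, X, X, mul_add, mul_add, monomial_mul, monomial_mul, monomial_mul, monomial_mul,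
        mul_one, mul_one, add_comm]
      congr 2
      · simp only [add_assoc]
      · rw [add_comm]
    rw [h2, h3]
    exact J.mul_mem_left _ hfJ
  have hIJ : ∀ p ∈ I, T K a b p ∈ J := by
    have hmon : ∀ u : Fin r →₀ ℕ, ((∃ i, r ≤ u i) ∨ ∀ i, 1 ≤ u i) →
        T K a b (monomial u 1) ∈ J := by
      intro u hu
      by_cases hb : box u
      · exact hboxJ u hb
      · rw [T_not a b hb]
        have : ∃ i, r ≤ u i := by
          rcases hu with h | h
          · exact h
          · by_contra! hc
            exact hb fun i => ⟨h i, hc i⟩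
        obtain ⟨i, hi⟩ := this
        exact X_pow_mem hXJ hi
    refine span_le_of_monomial _ ((J.restrictScalars K).comap (T K a b)) ?_
    rintro x (⟨i, rfl⟩ | hx) u
    · rw [X_pow_eq_monomial, monomial_mul, mul_one]
      exact hmon _ (Or.inl ⟨i, by simp⟩)
    · rw [Set.mem_singleton_iff.1 hx, prod_X, monomial_mul, mul_one]
      exact hmon _ (Or.inr fun i => by simp [one_apply])
  have hJI : ∀ p ∈ J, p ∈ (I.restrictScalars K).map (T K a b) := by
    have hpow : ∀ u : Fin r →₀ ℕ, ∀ i, r ≤ u i →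
        monomial u (1 : K) ∈ (I.restrictScalars K).map (T K a b) := by
      intro u i hi
      exact ⟨monomial u 1, X_pow_mem hXI hi, T_not a b fun h => by have := (h i).2; omega⟩
    have hP : ∀ k : ℕ, ∀ u : Fin r →₀ ℕ, r ≤ u a + k → (∀ i, i ≠ b → 1 ≤ u i) → r ≤ u a + u b →
        monomial u (1 : K) ∈ (I.restrictScalars K).map (T K a b) := by
      intro k
      induction k with
      | zero => intro u hk _ _; exact hpow u a (by omega)
      | succ k ih =>
        intro u hk h1 h2
        by_cases hc : ∃ i, r ≤ u i
        · obtain ⟨i, hi⟩ := hc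
          exact hpow u i hi
        · push Not at hc
          have hpos : ∀ i, 1 ≤ u i := by
            intro i
            by_cases hi : i = b
            · subst hi; have := hc a; omega
            · exact h1 i hi
          have hbox : box u := fun i => ⟨hpos i, hc i⟩
          have hsh := ih (shift a b u) (by rw [shift_a hab]; omega)
            (fun i hi => (h1 i hi).trans (shift_ge hi u))
            (by rw [shift_a hab, shift_b hab]; have := hpos b; omega)
          have hT : T K a b (monomial u 1) ∈ (I.restrictScalars K).map (T K a b) :=
            ⟨_, hboxI u hpos, rfl⟩
          rw [T_box a b hbox] at hT
          simpa using Submodule.sub_mem _ hT hsh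
    refine span_le_of_monomial _ _ ?_
    rintro x (⟨i, rfl⟩ | hx) u
    · rw [X_pow_eq_monomial, monomial_mul, mul_one]
      exact hpow _ i (by simp)
    · have h3 : monomial u 1 * x = monomial (u + one s + Finsupp.single b 1) (1 : K) +
        monomial (u + one s + Finsupp.single a 1) 1 := by
        rw [Set.mem_singleton_iff.1 hx, prod_X, X, X, mul_add, mul_add, monomial_mul,
          monomial_mul, monomial_mul, monomial_mul, mul_one, mul_one, add_comm]
        simp only [add_assoc]
      rw [h3]
      have hw : ∀ i, i ≠ b → 1 ≤ (u + one s) i := by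
        intro i hi; simp [one_apply, hs, hi]
      generalize u + one s = w at hw
      by_cases hc : ∃ i, r ≤ w i
      · obtain ⟨i, hi⟩ := hc
        exact Submodule.add_mem _ (hpow _ i (by simp; omega)) (hpow _ i (by simp; omega))
      · push Not at hc
        by_cases hwb : w b + 1 < r
        · have hpos : ∀ i, 1 ≤ (w + Finsupp.single b 1 : Fin r →₀ ℕ) i := by
            intro i
            by_cases hi : i = b
            · subst hi; simp
            · have := hw i hi; simp; omega
          have hbox : box (w + Finsupp.single b 1) := by
            intro i
            refine ⟨hpos i, ?_⟩
            by_cases hi : i = b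
            · subst hi; simpa using hwb
            · simpa [Finsupp.single_apply, Ne.symm hi] using hc i
          refine ⟨monomial (w + Finsupp.single b 1) 1, hboxI _ hpos, ?_⟩
          rw [T_box a b hbox]
          congr 2
          simp [shift]
        · refine Submodule.add_mem _ (hpow _ b (by simp; omega)) (hP r _ (by omega) ?_ ?_)
          · intro i hi; have := hw i hi; simp; omega
          · simp [hab]; omega
  have hker : ∀ p, ((Ideal.Quotient.mkₐ K J).toLinearMap ∘ₗ T K a b) p = 0 ↔
      (Ideal.Quotient.mkₐ K I).toLinearMap p = 0 := by
    intro p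
    simp only [LinearMap.comp_apply, AlgHom.toLinearMap_apply, Ideal.Quotient.mkₐ_eq_mk,
      Ideal.Quotient.eq_zero_iff_mem]
    refine ⟨fun h => ?_, hIJ p⟩
    obtain ⟨q, hq, hqp⟩ := hJI _ h
    rw [← (T_bij hab).1 hqp]
    exact hq
  unfold hilb component
  rw [← finrank_map_eq_of_ker _ _ hker, Submodule.map_comp, T_map hab]

end Stmt10

/-- `R/(x₁^r,…,xᵣ^r, x₁⋯x_{r-1}(x₁+xᵣ))` and `R/(x₁^r,…,xᵣ^r, x₁⋯xᵣ)` have the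
same Hilbert function. -/
theorem stmt_10 {K : Type*} [Field K] (r : ℕ) (hr : 3 ≤ r) :
    letI Irr : Ideal (MvPolynomial (Fin r) K) :=
      Ideal.span ({p | ∃ i : Fin r, p = X i ^ r} ∪ {∏ i : Fin r, X i})
    letI Jr : Ideal (MvPolynomial (Fin r) K) :=
      Ideal.span ({p | ∃ i : Fin r, p = X i ^ r} ∪
        {(∏ i ∈ Finset.univ.filter (fun i : Fin r => (i : ℕ) < r - 1), X i) *
          (X (⟨0, by omega⟩ : Fin r) + X (⟨r - 1, by omega⟩ : Fin r))})
    ∀ j : ℕ, hilb r K Jr j = hilb r K Irr j := by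
  intro j
  refine Stmt10.main ?_ _ ?_ j
  · intro h
    have := congrArg Fin.val h
    simp only at this
    omega
  · intro i
    simp only [Finset.mem_filter, Finset.mem_univ, true_and, ne_eq, Fin.ext_iff]
    have := i.2
    omega
end

section
/- For every field K, the Artinian algebra K[x,y,z]/(x^3, y^3, z^3, xy(x+z)) has the WLP if and only if the characteristic of K is not 3. -/
open MvPolynomial

namespace Stmt11

variable {K : Type*} [Field K]

/-- The ideal of the statement. -/
noncomputable def J (K : Type*) [Field K] : Ideal (MvPolynomial (Fin 3) K) :=
  Ideal.span {(X 0 : MvPolynomial (Fin 3) K) ^ 3, X 1 ^ 3, X 2 ^ 3, X 0 * X 1 * (X 0 + X 2)}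

/-- Polynomials congruent mod `I` to `L` times a form of degree `d`. -/
noncomputable def S (I : Ideal (MvPolynomial (Fin 3) K)) (L : MvPolynomial (Fin 3) K) (d : ℕ) :
    Submodule K (MvPolynomial (Fin 3) K) :=
  (homogeneousSubmodule (Fin 3) K d).map (LinearMap.mulLeft K L) ⊔ I.restrictScalars K

lemma mem_S {I : Ideal (MvPolynomial (Fin 3) K)} {L q : MvPolynomial (Fin 3) K} {d : ℕ} :
    q ∈ S I L d ↔ ∃ p ∈ homogeneousSubmodule (Fin 3) K d, L * p - q ∈ I := by
  unfold S
  rw [Submodule.mem_sup]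
  constructor
  · rintro ⟨y, hy, z, hz, rfl⟩
    obtain ⟨p, hp, rfl⟩ := hy
    refine ⟨p, hp, ?_⟩
    have : L * p - (LinearMap.mulLeft K L p + z) = -z := by
      simp
    rw [this]
    exact I.neg_mem hz
  · rintro ⟨p, hp, h⟩
    refine ⟨L * p, ⟨p, hp, rfl⟩, q - L * p, ?_, by ring⟩
    have := I.neg_mem h
    rw [neg_sub] at this
    exact this

lemma step {n : ℕ} {T : Submodule K (MvPolynomial (Fin 3) K)}
    (h : ∀ i, ∀ p ∈ homogeneousSubmodule (Fin 3) K n, X i * p ∈ T) :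
    homogeneousSubmodule (Fin 3) K (n + 1) ≤ T := by
  rw [← homogeneousSubmodule_one_pow, pow_succ', homogeneousSubmodule_one_pow,
    homogeneousSubmodule_one_eq_span_X, Submodule.mul_le]
  intro m hm p hp
  induction hm using Submodule.span_induction with
  | mem x hx => obtain ⟨i, rfl⟩ := hx; exact h i p hp
  | zero => simp
  | add x y _ _ hx hy => rw [add_mul]; exact T.add_mem hx hy
  | smul a x _ hx => rw [smul_mul_assoc]; exact T.smul_mem a hx

lemma step1 {T : Submodule K (MvPolynomial (Fin 3) K)} (h : ∀ i, X i ∈ T) :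
    homogeneousSubmodule (Fin 3) K 1 ≤ T := by
  rw [homogeneousSubmodule_one_eq_span_X, Submodule.span_le]
  rintro _ ⟨i, rfl⟩
  exact h i

lemma step2 {T : Submodule K (MvPolynomial (Fin 3) K)} (h : ∀ i j, X i * X j ∈ T) :
    homogeneousSubmodule (Fin 3) K 2 ≤ T :=
  step fun i p hp => step1 (T := T.comap (LinearMap.mulLeft K (X i))) (fun j => h i j) hp

lemma step3 {T : Submodule K (MvPolynomial (Fin 3) K)} (h : ∀ i j k, X i * (X j * X k) ∈ T) :
    homogeneousSubmodule (Fin 3) K 3 ≤ T :=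
  step fun i p hp => step2 (T := T.comap (LinearMap.mulLeft K (X i))) (fun j k => h i j k) hp

lemma surj_iff {I : Ideal (MvPolynomial (Fin 3) K)} {L : MvPolynomial (Fin 3) K} {d : ℕ} :
    mulMapSurj 3 K I L d ↔ homogeneousSubmodule (Fin 3) K (d + 1) ≤ S I L d := by
  constructor
  · intro h q hq
    obtain ⟨a, ⟨p, hp, rfl⟩, ha⟩ := h (Ideal.Quotient.mk I q) ⟨q, hq, rfl⟩
    rw [mem_S]
    refine ⟨p, hp, ?_⟩
    rw [← Ideal.Quotient.eq, map_mul]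
    exact ha
  · rintro h _ ⟨q, hq, rfl⟩
    obtain ⟨p, hp, hpq⟩ := mem_S.1 (h hq)
    refine ⟨Ideal.Quotient.mk I p, ⟨p, hp, rfl⟩, ?_⟩
    rw [← map_mul]
    exact Ideal.Quotient.eq.2 hpq

lemma surj_succ {I : Ideal (MvPolynomial (Fin 3) K)} {L : MvPolynomial (Fin 3) K} {d : ℕ}
    (h : mulMapSurj 3 K I L d) : mulMapSurj 3 K I L (d + 1) := by
  rw [surj_iff] at h ⊢
  refine step fun i p hp => ?_
  obtain ⟨q, hq, hqp⟩ := mem_S.1 (h hp)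
  refine mem_S.2 ⟨X i * q, ?_, ?_⟩
  · have := (isHomogeneous_X K i).mul hq
    rwa [add_comm] at this
  · have := I.mul_mem_left (X i) hqp
    convert this using 1
    ring

lemma X_mem (i : Fin 3) : (X i : MvPolynomial (Fin 3) K) ∈ idealOfVars (Fin 3) K :=
  Ideal.subset_span ⟨i, rfl⟩

lemma J_le : J K ≤ idealOfVars (Fin 3) K ^ 3 := by
  unfold J
  rw [Ideal.span_le]
  intro g hg
  simp only [Set.mem_insert_iff, Set.mem_singleton_iff] at hg
  rcases hg with rfl | rfl | rfl | rfl
  · exact Ideal.pow_mem_pow (X_mem 0) 3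
  · exact Ideal.pow_mem_pow (X_mem 1) 3
  · exact Ideal.pow_mem_pow (X_mem 2) 3
  · rw [pow_succ, pow_two]
    exact Ideal.mul_mem_mul (Ideal.mul_mem_mul (X_mem 0) (X_mem 1))
      (Ideal.add_mem _ (X_mem 0) (X_mem 2))

lemma J_low {d : ℕ} (hd : d < 3) {p : MvPolynomial (Fin 3) K} (hp : p.IsHomogeneous d)
    (h : p ∈ J K) : p = 0 := by
  have h1 := (mem_pow_idealOfVars_iff' 3 p).1 (J_le h)
  ext m
  by_cases hm : m.degree = d
  · rw [h1 m (by omega), coeff_zero]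
  · rw [hp.coeff_eq_zero hm, coeff_zero]

lemma inj_low {d : ℕ} (hd : d + 1 < 3) {L : MvPolynomial (Fin 3) K} (hL : L.IsHomogeneous 1)
    (hL0 : L ≠ 0) : mulMapInj 3 K (J K) L d := by
  rintro _ ⟨p, hp, rfl⟩ h
  have h2 : L * p ∈ J K := by
    rw [← Ideal.Quotient.eq_zero_iff_mem, map_mul]
    exact h
  have h3 := J_low (by omega) (hL.mul hp) h2
  have : p = 0 := by simpa [hL0] using h3
  simp [this]

lemma surj_two (h3 : (3 : K) ≠ 0) : mulMapSurj 3 K (J K) (X 0 + X 1 + X 2) 2 := by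
  rw [surj_iff]
  have hx : (X 0 : MvPolynomial (Fin 3) K) ^ 3 ∈ J K := Ideal.subset_span (by simp)
  have hy : (X 1 : MvPolynomial (Fin 3) K) ^ 3 ∈ J K := Ideal.subset_span (by simp)
  have hz : (X 2 : MvPolynomial (Fin 3) K) ^ 3 ∈ J K := Ideal.subset_span (by simp)
  have hw : (X 0 : MvPolynomial (Fin 3) K) * X 1 * (X 0 + X 2) ∈ J K :=
    Ideal.subset_span (by simp)
  set T := S (J K) (X 0 + X 1 + X 2) 2 with hT
  have hJ : ∀ q ∈ J K, q ∈ T := fun q hq => Submodule.mem_sup_right hq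
  have hL : ∀ i j, (X 0 + X 1 + X 2) * (X i * X j) ∈ T := fun i j =>
    Submodule.mem_sup_left ⟨X i * X j, (isHomogeneous_X K i).mul (isHomogeneous_X K j), rfl⟩
  have key : ∀ q : MvPolynomial (Fin 3) K, 3 * q ∈ T → q ∈ T := by
    intro q hq
    have := T.smul_mem (3 : K)⁻¹ hq
    have e : (3 : MvPolynomial (Fin 3) K) * q = (3 : K) • q := by
      rw [smul_eq_C_mul, map_ofNat]
    rwa [e, smul_smul, inv_mul_cancel₀ h3, one_smul] at this
  -- everything in the `K`-module generated by these
  have hx' := hJ _ hx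
  have hy' := hJ _ hy
  have hz' := hJ _ hz
  have hw' := hJ _ hw
  have a0 := hL 0 0
  have a1 := hL 1 1
  have a2 := hL 2 2
  have a3 := hL 0 1
  have a4 := hL 0 2
  have a5 := hL 1 2
  have hyyx : (X 0 : MvPolynomial (Fin 3) K) * X 1 ^ 2 ∈ T := by
    convert T.sub_mem a3 hw' using 1; ring
  have hyyz : (X 2 : MvPolynomial (Fin 3) K) * X 1 ^ 2 ∈ T := by
    convert T.sub_mem (T.sub_mem a1 hyyx) hy' using 1; ring
  have hxyz : (X 0 : MvPolynomial (Fin 3) K) * X 1 * X 2 ∈ T := by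
    apply key
    convert T.add_mem (T.sub_mem (T.add_mem (T.add_mem a3 a4) a5)
      (T.add_mem (T.add_mem a0 a1) a2)) (T.add_mem (T.add_mem hx' hy') hz') using 1; ring
  have hxxy : (X 0 : MvPolynomial (Fin 3) K) ^ 2 * X 1 ∈ T := by
    convert T.sub_mem hw' hxyz using 1; ring
  have hxxz : (X 0 : MvPolynomial (Fin 3) K) ^ 2 * X 2 ∈ T := by
    convert T.sub_mem (T.sub_mem a0 hx') hxxy using 1; ring
  have hxzz : (X 0 : MvPolynomial (Fin 3) K) * X 2 ^ 2 ∈ T := by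
    convert T.sub_mem (T.sub_mem a4 hxxz) hxyz using 1; ring
  have hyzz : (X 1 : MvPolynomial (Fin 3) K) * X 2 ^ 2 ∈ T := by
    convert T.sub_mem (T.sub_mem a5 hyyz) hxyz using 1; ring
  refine step3 fun i j k => ?_
  fin_cases i <;> fin_cases j <;> fin_cases k <;>
  first
  | (convert hx' using 1; dsimp; ring1)
  | (convert hy' using 1; dsimp; ring1)
  | (convert hz' using 1; dsimp; ring1)
  | (convert hyyx using 1; dsimp; ring1)
  | (convert hyyz using 1; dsimp; ring1)
  | (convert hxyz using 1; dsimp; ring1)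
  | (convert hxxy using 1; dsimp; ring1)
  | (convert hxxz using 1; dsimp; ring1)
  | (convert hxzz using 1; dsimp; ring1)
  | (convert hyzz using 1; dsimp; ring1)

/-- exponent vector -/
noncomputable def mon (i j k : ℕ) : Fin 3 →₀ ℕ :=
  Finsupp.single 0 i + Finsupp.single 1 j + Finsupp.single 2 k

lemma mon_inj {a b c i j k : ℕ} : mon a b c = mon i j k ↔ a = i ∧ b = j ∧ c = k := by
  simp [mon, Finsupp.ext_iff, Fin.forall_fin_succ]

lemma mon_degree (a b c : ℕ) : (mon a b c).degree = a + b + c := by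
  simp [mon, Finsupp.degree_single]

lemma X_eq (a b c : ℕ) :
    (X 0 ^ a * X 1 ^ b * X 2 ^ c : MvPolynomial (Fin 3) K) = monomial (mon a b c) 1 := by
  simp [mon, X_pow_eq_monomial, monomial_mul]

lemma coeff_X (a b c i j k : ℕ) :
    coeff (mon i j k) (X 0 ^ a * X 1 ^ b * X 2 ^ c : MvPolynomial (Fin 3) K) =
      if a = i ∧ b = j ∧ c = k then 1 else 0 := by
  classical
  rw [X_eq, coeff_monomial]
  simp only [mon_inj]

/-- coordinates on the degree three part of the quotient -/
noncomputable def psi : MvPolynomial (Fin 3) K →ₗ[K] (Fin 6 → K) :=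
  LinearMap.pi ![lcoeff K (mon 2 0 1), lcoeff K (mon 1 2 0), lcoeff K (mon 0 2 1),
    lcoeff K (mon 1 0 2), lcoeff K (mon 0 1 2), lcoeff K (mon 1 1 1) - lcoeff K (mon 2 1 0)]

lemma psi_X (a b c : ℕ) :
    psi (X 0 ^ a * X 1 ^ b * X 2 ^ c : MvPolynomial (Fin 3) K) =
      ![if a = 2 ∧ b = 0 ∧ c = 1 then 1 else 0,
        if a = 1 ∧ b = 2 ∧ c = 0 then 1 else 0,
        if a = 0 ∧ b = 2 ∧ c = 1 then 1 else 0,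
        if a = 1 ∧ b = 0 ∧ c = 2 then 1 else 0,
        if a = 0 ∧ b = 1 ∧ c = 2 then 1 else 0,
        (if a = 1 ∧ b = 1 ∧ c = 1 then 1 else 0) - (if a = 2 ∧ b = 1 ∧ c = 0 then 1 else 0)] := by
  ext i
  fin_cases i <;> simp [psi, lcoeff_apply, coeff_X]

lemma psi_high {p : MvPolynomial (Fin 3) K} (h : p ∈ idealOfVars (Fin 3) K ^ 4) : psi p = 0 := by
  have h1 := (mem_pow_idealOfVars_iff' 4 p).1 h
  have h2 : ∀ a b c, a + b + c < 4 → coeff (mon a b c) p = 0 := fun a b c hh =>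
    h1 _ (by rw [mon_degree]; exact hh)
  ext i
  fin_cases i <;> simp [psi, lcoeff_apply, h2]

lemma psi_mul {g : MvPolynomial (Fin 3) K} (h : g ∈ idealOfVars (Fin 3) K ^ 3)
    (hg : psi g = 0) (p : MvPolynomial (Fin 3) K) : psi (p * g) = 0 := by
  have e : p * g = coeff 0 p • g + (p - C (coeff 0 p)) * g := by
    rw [smul_eq_C_mul]; ring
  have hp : p - C (coeff 0 p) ∈ idealOfVars (Fin 3) K := by
    rw [← pow_one (idealOfVars (Fin 3) K), mem_pow_idealOfVars_iff']
    intro x hx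
    have : x = 0 := by
      rw [← Finsupp.degree_eq_zero_iff]; omega
    simp [this]
  rw [e, map_add, map_smul, hg, psi_high, smul_zero, add_zero]
  rw [pow_succ']
  exact Ideal.mul_mem_mul hp h

lemma psi_J {q : MvPolynomial (Fin 3) K} (h : q ∈ J K) : psi q = 0 := by
  have h' := h
  unfold J at h'
  induction h' using Submodule.span_induction with
  | mem x hx =>
    simp only [Set.mem_insert_iff, Set.mem_singleton_iff] at hx
    rcases hx with rfl | rfl | rfl | rfl
    · have := psi_X (K := K) 3 0 0
      simp only [pow_zero, mul_one, one_mul] at this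
      rw [this]
      ext i
      fin_cases i <;> simp
    · have := psi_X (K := K) 0 3 0
      simp only [pow_zero, mul_one, one_mul] at this
      rw [this]
      ext i
      fin_cases i <;> simp
    · have := psi_X (K := K) 0 0 3
      simp only [pow_zero, mul_one, one_mul] at this
      rw [this]
      ext i
      fin_cases i <;> simp
    · have e : (X 0 * X 1 * (X 0 + X 2) : MvPolynomial (Fin 3) K) =
        X 0 ^ 2 * X 1 ^ 1 * X 2 ^ 0 + X 0 ^ 1 * X 1 ^ 1 * X 2 ^ 1 := by ring
      rw [e, map_add, psi_X, psi_X]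
      simp
  | zero => simp
  | add x y hx hy ihx ihy => rw [map_add, ihx hx, ihy hy, add_zero]
  | smul a x hx ih => exact psi_mul (J_le hx) (ih hx) a

/-- quadratic forms -/
noncomputable def phi : (Fin 6 → K) →ₗ[K] MvPolynomial (Fin 3) K :=
  Fintype.linearCombination K ![X 0 * X 0, X 1 * X 1, X 2 * X 2, X 0 * X 1, X 0 * X 2, X 1 * X 2]

lemma phi_surj : homogeneousSubmodule (Fin 3) K 2 ≤ LinearMap.range (phi (K := K)) := by
  have hb : ∀ n : Fin 6, (![X 0 * X 0, X 1 * X 1, X 2 * X 2, X 0 * X 1, X 0 * X 2, X 1 * X 2] n :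
      MvPolynomial (Fin 3) K) ∈ LinearMap.range (phi (K := K)) := fun n =>
    ⟨Pi.single n 1, by rw [phi, Fintype.linearCombination_apply_single, one_smul]⟩
  refine step2 fun i j => ?_
  fin_cases i <;> fin_cases j
  · exact hb 0
  · exact hb 3
  · exact hb 4
  · rw [mul_comm]; exact hb 3
  · exact hb 1
  · exact hb 5
  · rw [mul_comm]; exact hb 4
  · rw [mul_comm]; exact hb 5
  · exact hb 2

lemma psi_surj (w : Fin 6 → K) :
    ∃ q ∈ homogeneousSubmodule (Fin 3) K 3, psi q = w := by
  have hh : ∀ a b c : ℕ, a + b + c = 3 → (X 0 ^ a * X 1 ^ b * X 2 ^ c : MvPolynomial (Fin 3) K) ∈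
      homogeneousSubmodule (Fin 3) K 3 := by
    intro a b c h
    rw [X_eq]
    exact isHomogeneous_monomial _ (by rw [mon_degree, h])
  let V := homogeneousSubmodule (Fin 3) K 3
  refine ⟨w 0 • (X 0 ^ 2 * X 1 ^ 0 * X 2 ^ 1) + w 1 • (X 0 ^ 1 * X 1 ^ 2 * X 2 ^ 0) +
    w 2 • (X 0 ^ 0 * X 1 ^ 2 * X 2 ^ 1) + w 3 • (X 0 ^ 1 * X 1 ^ 0 * X 2 ^ 2) +
    w 4 • (X 0 ^ 0 * X 1 ^ 1 * X 2 ^ 2) + w 5 • (X 0 ^ 1 * X 1 ^ 1 * X 2 ^ 1), ?_, ?_⟩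
  · refine V.add_mem (V.add_mem (V.add_mem (V.add_mem (V.add_mem ?_ ?_) ?_) ?_) ?_) ?_ <;>
    exact V.smul_mem _ (hh _ _ _ rfl)
  · simp only [map_add, map_smul, psi_X]
    ext i
    fin_cases i <;> simp

lemma cube_mem [CharP K 3] {L : MvPolynomial (Fin 3) K}
    (hL : L ∈ homogeneousSubmodule (Fin 3) K 1) : L ^ 3 ∈ J K := by
  rw [homogeneousSubmodule_one_eq_span_X] at hL
  haveI : Fact (Nat.Prime 3) := ⟨Nat.prime_three⟩
  induction hL using Submodule.span_induction with
  | mem x hx =>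
    obtain ⟨i, rfl⟩ := hx
    fin_cases i <;> exact Ideal.subset_span (by simp)
  | zero => simp
  | add x y _ _ hx hy =>
    rw [add_pow_char]
    exact Ideal.add_mem _ hx hy
  | smul a x _ hx =>
    rw [smul_pow, smul_eq_C_mul]
    exact Ideal.mul_mem_left _ _ hx

lemma exists_ker [CharP K 3] {L : MvPolynomial (Fin 3) K}
    (hL : L ∈ homogeneousSubmodule (Fin 3) K 1) :
    ∃ p ∈ homogeneousSubmodule (Fin 3) K 2, p ≠ 0 ∧ L * p ∈ J K := by
  by_cases h : L = 0
  · exact ⟨X 0 * X 0, (isHomogeneous_X K 0).mul (isHomogeneous_X K 0), by simp [X_ne_zero],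
      by simp [h]⟩
  · refine ⟨L * L, IsHomogeneous.mul hL hL, by simp [h], ?_⟩
    have := cube_mem hL
    rwa [pow_succ', pow_two] at this

lemma not_wlp [CharP K 3] : ¬ hasWLP 3 K (J K) := by
  rintro ⟨L, hL, h⟩
  obtain ⟨p, hp, hp0, hpJ⟩ := exists_ker hL
  rcases h 2 with h | h
  · have h1 := h (Ideal.Quotient.mk (J K) p) ⟨p, hp, rfl⟩
      (by rw [← map_mul]; exact Ideal.Quotient.eq_zero_iff_mem.2 hpJ)
    exact hp0 (J_low (by norm_num) hp (Ideal.Quotient.eq_zero_iff_mem.1 h1))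
  · rw [surj_iff] at h
    let f : (Fin 6 → K) →ₗ[K] (Fin 6 → K) := psi ∘ₗ LinearMap.mulLeft K L ∘ₗ phi
    have hs : Function.Surjective f := by
      intro w
      obtain ⟨q, hq, rfl⟩ := psi_surj w
      obtain ⟨r, hr, hrq⟩ := mem_S.1 (h hq)
      obtain ⟨v, rfl⟩ := phi_surj hr
      refine ⟨v, ?_⟩
      have := psi_J hrq
      rw [map_sub, sub_eq_zero] at this
      exact this
    have hi := LinearMap.injective_iff_surjective.2 hs
    obtain ⟨v, rfl⟩ := phi_surj hp
    have : v = 0 := hi (by rw [map_zero]; exact psi_J hpJ)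
    exact hp0 (by rw [this, map_zero])

lemma wlp (h3 : (3 : K) ≠ 0) : hasWLP 3 K (J K) := by
  have hL : (X 0 + X 1 + X 2 : MvPolynomial (Fin 3) K).IsHomogeneous 1 :=
    ((isHomogeneous_X K 0).add (isHomogeneous_X K 1)).add (isHomogeneous_X K 2)
  have hL0 : (X 0 + X 1 + X 2 : MvPolynomial (Fin 3) K) ≠ 0 := by
    intro h
    have := congrArg (eval ![1, 0, 0]) h
    simp at this
  refine ⟨X 0 + X 1 + X 2, hL, fun d => ?_⟩
  by_cases hd : d + 1 < 3
  · exact Or.inl (inj_low hd hL hL0)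
  · right
    obtain ⟨e, rfl⟩ : ∃ e, d = 2 + e := ⟨d - 2, by omega⟩
    clear hd
    induction e with
    | zero => exact surj_two h3
    | succ e ih => exact surj_succ ih

end Stmt11

/-- `K[x,y,z]/(x³, y³, z³, xy(x+z))` has the WLP iff `char K ≠ 3`. -/
theorem stmt_11 {K : Type*} [Field K] :
    hasWLP 3 K (Ideal.span {(X 0 : MvPolynomial (Fin 3) K) ^ 3, X 1 ^ 3, X 2 ^ 3,
      X 0 * X 1 * (X 0 + X 2)}) ↔ ringChar K ≠ 3 := by
  constructor
  · intro h h3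
    haveI : CharP K 3 := by rw [← h3]; infer_instance
    exact Stmt11.not_wlp h
  · intro h
    refine Stmt11.wlp fun h3 => h ?_
    have h1 : ringChar K ∣ 3 := ringChar.dvd (by exact_mod_cast h3)
    rcases (Nat.dvd_prime Nat.prime_three).1 h1 with h2 | h2
    · exact absurd h2 (CharP.ringChar_ne_one)
    · exact h2
end

section
/- For every field K, the Artinian algebra K[w,x,y,z]/(w^4, x^4, y^4, z^4, wxy(w+z)) has the WLP if and only if the characteristic of K is neither 2 nor 5. -/
open MvPolynomial

namespace WLPaux

/-- The exponent vector `(a, b, c, d)`. -/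
noncomputable def mo (a b c d : ℕ) : Fin 4 →₀ ℕ := Finsupp.equivFunOnFinite.symm ![a, b, c, d]

lemma mo_inj (a b c d a' b' c' d' : ℕ) :
    mo a' b' c' d' = mo a b c d ↔ (a' = a ∧ b' = b ∧ c' = c ∧ d' = d) := by
  constructor
  · intro h
    have h0 := DFunLike.congr_fun h 0
    have h1 := DFunLike.congr_fun h 1
    have h2 := DFunLike.congr_fun h 2
    have h3 := DFunLike.congr_fun h 3
    simp [mo] at h0 h1 h2 h3
    exact ⟨h0, h1, h2, h3⟩
  · rintro ⟨rfl, rfl, rfl, rfl⟩; rfl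

lemma term_eq {K : Type*} [Field K] (t : K) (a b c d : ℕ) :
    (C t * X 0 ^ a * X 1 ^ b * X 2 ^ c * X 3 ^ d : MvPolynomial (Fin 4) K)
      = monomial (mo a b c d) t := by
  rw [monomial_eq, Finsupp.prod_fintype _ _ (by simp), Fin.prod_univ_four]
  simp [mo, mul_assoc]

set_option maxHeartbeats 1600000 in
lemma key_rel {K : Type*} [Field K] (h2 : (2 : K) ≠ 0) (h5 : (5 : K) ≠ 0) (a b c : Fin 5 → K)
    (h : (C (a 0) * X 0 + C (b 0) * X 1 + C (c 0) * X 2) * X 0 ^ 4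
      + (C (a 1) * X 0 + C (b 1) * X 1 + C (c 1) * X 2) * X 1 ^ 4
      + (C (a 2) * X 0 + C (b 2) * X 1 + C (c 2) * X 2) * X 2 ^ 4
      + (C (a 3) * X 0 + C (b 3) * X 1 + C (c 3) * X 2) * (X 0 + X 1 + X 2) ^ 4
      + (C (a 4) * X 0 + C (b 4) * X 1 + C (c 4) * X 2) *
        (X 0 * X 1 * X 2 * (X 0 + (X 0 + X 1 + X 2)))
      = (0 : MvPolynomial (Fin 4) K)) : ∀ i, a i = 0 ∧ b i = 0 ∧ c i = 0 := by
  have expand : (monomial (mo 5 0 0 0) (a 0 + a 3) : MvPolynomial (Fin 4) K)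
        + (monomial (mo 4 1 0 0) (b 0 + 4 * a 3 + b 3) : MvPolynomial (Fin 4) K)
        + (monomial (mo 4 0 1 0) (c 0 + 4 * a 3 + c 3) : MvPolynomial (Fin 4) K)
        + (monomial (mo 3 2 0 0) (6 * a 3 + 4 * b 3) : MvPolynomial (Fin 4) K)
        + (monomial (mo 3 1 1 0) (12 * a 3 + 4 * b 3 + 4 * c 3 + 2 * a 4) : MvPolynomial (Fin 4) K)
        + (monomial (mo 3 0 2 0) (6 * a 3 + 4 * c 3) : MvPolynomial (Fin 4) K)
        + (monomial (mo 2 3 0 0) (4 * a 3 + 6 * b 3) : MvPolynomial (Fin 4) K)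
        + (monomial (mo 2 2 1 0) (12 * a 3 + 12 * b 3 + 6 * c 3 + 2 * b 4 + a 4) : MvPolynomial (Fin 4) K)
        + (monomial (mo 2 1 2 0) (12 * a 3 + 6 * b 3 + 12 * c 3 + 2 * c 4 + a 4) : MvPolynomial (Fin 4) K)
        + (monomial (mo 2 0 3 0) (4 * a 3 + 6 * c 3) : MvPolynomial (Fin 4) K)
        + (monomial (mo 1 4 0 0) (a 1 + a 3 + 4 * b 3) : MvPolynomial (Fin 4) K)
        + (monomial (mo 1 3 1 0) (4 * a 3 + 12 * b 3 + 4 * c 3 + b 4) : MvPolynomial (Fin 4) K)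
        + (monomial (mo 1 2 2 0) (6 * a 3 + 12 * b 3 + 12 * c 3 + c 4 + b 4) : MvPolynomial (Fin 4) K)
        + (monomial (mo 1 1 3 0) (4 * a 3 + 4 * b 3 + 12 * c 3 + c 4) : MvPolynomial (Fin 4) K)
        + (monomial (mo 1 0 4 0) (a 2 + a 3 + 4 * c 3) : MvPolynomial (Fin 4) K)
        + (monomial (mo 0 5 0 0) (b 1 + b 3) : MvPolynomial (Fin 4) K)
        + (monomial (mo 0 4 1 0) (c 1 + 4 * b 3 + c 3) : MvPolynomial (Fin 4) K)
        + (monomial (mo 0 3 2 0) (6 * b 3 + 4 * c 3) : MvPolynomial (Fin 4) K)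
        + (monomial (mo 0 2 3 0) (4 * b 3 + 6 * c 3) : MvPolynomial (Fin 4) K)
        + (monomial (mo 0 1 4 0) (b 2 + b 3 + 4 * c 3) : MvPolynomial (Fin 4) K)
        + (monomial (mo 0 0 5 0) (c 2 + c 3) : MvPolynomial (Fin 4) K)
      = (0 : MvPolynomial (Fin 4) K) := by
    rw [← h]
    simp only [← term_eq, map_add, map_mul, map_ofNat]
    ring
  have co : ∀ p q r : ℕ, coeff (mo p q r 0) _ = coeff (mo p q r 0) (0 : MvPolynomial (Fin 4) K) :=
    fun p q r => congrArg (coeff (mo p q r 0)) expand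
  simp only [coeff_add, coeff_monomial, mo_inj, coeff_zero] at co
  have k500 : a 0 + a 3 = 0 := by simpa using co 5 0 0
  have k410 : b 0 + 4 * a 3 + b 3 = 0 := by simpa using co 4 1 0
  have k401 : c 0 + 4 * a 3 + c 3 = 0 := by simpa using co 4 0 1
  have k320 : 6 * a 3 + 4 * b 3 = 0 := by simpa using co 3 2 0
  have k311 : 12 * a 3 + 4 * b 3 + 4 * c 3 + 2 * a 4 = 0 := by simpa using co 3 1 1
  have k302 : 6 * a 3 + 4 * c 3 = 0 := by simpa using co 3 0 2
  have k230 : 4 * a 3 + 6 * b 3 = 0 := by simpa using co 2 3 0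
  have k221 : 12 * a 3 + 12 * b 3 + 6 * c 3 + 2 * b 4 + a 4 = 0 := by simpa using co 2 2 1
  have k212 : 12 * a 3 + 6 * b 3 + 12 * c 3 + 2 * c 4 + a 4 = 0 := by simpa using co 2 1 2
  have k203 : 4 * a 3 + 6 * c 3 = 0 := by simpa using co 2 0 3
  have k140 : a 1 + a 3 + 4 * b 3 = 0 := by simpa using co 1 4 0
  have k131 : 4 * a 3 + 12 * b 3 + 4 * c 3 + b 4 = 0 := by simpa using co 1 3 1
  have k122 : 6 * a 3 + 12 * b 3 + 12 * c 3 + c 4 + b 4 = 0 := by simpa using co 1 2 2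
  have k113 : 4 * a 3 + 4 * b 3 + 12 * c 3 + c 4 = 0 := by simpa using co 1 1 3
  have k104 : a 2 + a 3 + 4 * c 3 = 0 := by simpa using co 1 0 4
  have k050 : b 1 + b 3 = 0 := by simpa using co 0 5 0
  have k041 : c 1 + 4 * b 3 + c 3 = 0 := by simpa using co 0 4 1
  have k032 : 6 * b 3 + 4 * c 3 = 0 := by simpa using co 0 3 2
  have k023 : 4 * b 3 + 6 * c 3 = 0 := by simpa using co 0 2 3
  have k014 : b 2 + b 3 + 4 * c 3 = 0 := by simpa using co 0 1 4
  have k005 : c 2 + c 3 = 0 := by simpa using co 0 0 5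
  have c2 : ∀ t : K, 2 * t = 0 → t = 0 := fun t ht => (mul_eq_zero.1 ht).resolve_left h2
  have c5 : ∀ t : K, 5 * t = 0 → t = 0 := fun t ht => (mul_eq_zero.1 ht).resolve_left h5
  have a3 : a 3 = 0 := by
    apply c2; apply c2; apply c5
    linear_combination 6 * k320 - 4 * k230
  have b3 : b 3 = 0 := by
    apply c2; apply c2
    linear_combination k320 - 6 * a3
  have d3 : c 3 = 0 := by
    apply c2; apply c2
    linear_combination k302 - 6 * a3
  have a4 : a 4 = 0 := by
    apply c2
    linear_combination k311 - 12 * a3 - 4 * b3 - 4 * d3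
  have b4 : b 4 = 0 := by linear_combination k131 - 4 * a3 - 12 * b3 - 4 * d3
  have d4 : c 4 = 0 := by linear_combination k113 - 4 * a3 - 4 * b3 - 12 * d3
  simp only [a3, b3, d3, mul_zero, add_zero] at k500 k410 k401 k140 k050 k041 k104 k014 k005
  intro i
  fin_cases i <;> simp [*]

lemma hc_mul {K : Type*} [Field K] {f : MvPolynomial (Fin 4) K} {m : ℕ} (hf : f.IsHomogeneous m)
    (g : MvPolynomial (Fin 4) K) (n : ℕ) :
    homogeneousComponent n (g * f) =
      if m ≤ n then homogeneousComponent (n - m) g * f else 0 := by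
  let _ := MvPolynomial.gradedAlgebra (σ := Fin 4) (R := K)
  have := DirectSum.coe_decompose_mul_of_right_mem (𝒜 := homogeneousSubmodule (Fin 4) K)
    (a := g) (b := f) (i := m) n hf
  have e : ∀ (p : MvPolynomial (Fin 4) K) (k : ℕ),
      (DirectSum.decompose (homogeneousSubmodule (Fin 4) K) p k : MvPolynomial (Fin 4) K)
        = homogeneousComponent k p := fun p k => decomposition.decompose'_apply p k
  simpa only [e] using this

lemma pow_mem {K Q : Type*} [Field K] [CommRing Q] (φ : MvPolynomial (Fin 4) K →+* Q)
    (M : Ideal Q) (hM : ∀ i, φ (X i) ∈ M) {n : ℕ} {p : MvPolynomial (Fin 4) K}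
    (hp : p.IsHomogeneous n) : φ p ∈ M ^ n := by
  rw [p.as_sum, map_sum]
  refine Ideal.sum_mem _ fun m hm => ?_
  have hd := hp.degree_eq_sum_deg_support hm
  rw [monomial_eq, map_mul]
  refine Ideal.mul_mem_left _ _ ?_
  rw [Finsupp.prod_fintype _ _ (by simp), Fin.prod_univ_four]
  have : m.degree = m 0 + m 1 + m 2 + m 3 := by
    rw [Finsupp.degree_eq_sum, Fin.sum_univ_four]
  have hd : n = m 0 + m 1 + m 2 + m 3 := by rw [← this, hd]; rfl
  rw [hd, pow_add, pow_add, pow_add]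
  simp only [map_mul, map_pow]
  exact Ideal.mul_mem_mul (Ideal.mul_mem_mul (Ideal.mul_mem_mul
    (Ideal.pow_mem_pow (hM 0) _) (Ideal.pow_mem_pow (hM 1) _))
    (Ideal.pow_mem_pow (hM 2) _)) (Ideal.pow_mem_pow (hM 3) _)

/-- The three-variable computation: all degree six monomials vanish modulo the ideal and `L`. -/
lemma deg_six {Q : Type*} [CommRing Q] (h2 : IsUnit (2 : Q)) (h5 : IsUnit (5 : Q)) (w x y : Q)
    (hw : w ^ 4 = 0) (hx : x ^ 4 = 0) (hy : y ^ 4 = 0) (hl : (w + x + y) ^ 4 = 0)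
    (hh : w * x * y * (w + (w + x + y)) = 0) (i j k : ℕ) (hs : i + j + k = 6) :
    w ^ i * x ^ j * y ^ k = 0 := by
  have c2 : ∀ a : Q, 2 * a = 0 → a = 0 := fun a h => (h2.mul_right_eq_zero).1 h
  have c5 : ∀ a : Q, 5 * a = 0 → a = 0 := fun a h => (h5.mul_right_eq_zero).1 h
  have r1 : w ^ 3 * x * y ^ 2 = - (w ^ 3 * x ^ 2 * y) := by
    linear_combination w ^ 2 * hh - 2 * x * y * hw
  have r2 : w ^ 2 * x ^ 3 * y = -2 * (w ^ 3 * x ^ 2 * y) - w ^ 2 * x ^ 2 * y ^ 2 := by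
    linear_combination w * x * hh
  have r3 : w ^ 2 * x * y ^ 3 = 2 * (w ^ 3 * x ^ 2 * y) - w ^ 2 * x ^ 2 * y ^ 2 := by
    linear_combination w * y * hh - 2 * r1
  have r4 : w * x ^ 3 * y ^ 2 = 4 * (w ^ 3 * x ^ 2 * y) + 2 * (w ^ 2 * x ^ 2 * y ^ 2) := by
    linear_combination x ^ 2 * hh - 2 * r2 - w * y * hx
  have r5 : w * x ^ 2 * y ^ 3 = -4 * (w ^ 3 * x ^ 2 * y) + 2 * (w ^ 2 * x ^ 2 * y ^ 2) := by
    linear_combination y ^ 2 * hh - 2 * r3 - w * x * hy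
  have r6 : 6 * (w ^ 2 * x ^ 2 * y ^ 2) = 0 := by
    linear_combination x * y * hh - r4 - r5
  have e1 : 4 * (w ^ 3 * x ^ 3) + 4 * (w ^ 3 * y ^ 3) - 2 * (w ^ 2 * x ^ 2 * y ^ 2) = 0 := by
    linear_combination w ^ 2 * hl
      - (w ^ 2 + 4 * w * (x + y) + 6 * (x + y) ^ 2) * hw - w ^ 2 * hx - w ^ 2 * hy
      - 4 * r2 - 4 * r3 - 12 * r1
  have e2 : 12 * (w ^ 3 * x ^ 2 * y) + 26 * (w ^ 2 * x ^ 2 * y ^ 2) + 4 * (w ^ 3 * x ^ 3)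
      + 4 * (x ^ 3 * y ^ 3) = 0 := by
    linear_combination x ^ 2 * hl
      - (x ^ 2 + 4 * x * (w + y) + 6 * (w + y) ^ 2) * hx - x ^ 2 * hw - x ^ 2 * hy
      - 4 * r5 - 12 * r2 - 12 * r4
  have e3 : -12 * (w ^ 3 * x ^ 2 * y) + 26 * (w ^ 2 * x ^ 2 * y ^ 2) + 4 * (w ^ 3 * y ^ 3)
      + 4 * (x ^ 3 * y ^ 3) = 0 := by
    linear_combination y ^ 2 * hl
      - (y ^ 2 + 4 * y * (w + x) + 6 * (w + x) ^ 2) * hy - y ^ 2 * hw - y ^ 2 * hx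
      - 4 * r4 - 12 * r3 - 12 * r5 - 4 * r1
  have e4 : 6 * (w ^ 3 * x ^ 3) - 2 * (w ^ 3 * x ^ 2 * y) + 16 * (w ^ 2 * x ^ 2 * y ^ 2) = 0 := by
    linear_combination w * x * hl
      - (w * x + 4 * x * (x + y)) * hw - (w * x + 4 * w * (w + y)) * hx - w * x * hy
      - 6 * r1 - 6 * r4 - 12 * r2 - 4 * r3 - 4 * r5
  have e5 : 6 * (w ^ 3 * y ^ 3) + 2 * (w ^ 3 * x ^ 2 * y) + 16 * (w ^ 2 * x ^ 2 * y ^ 2) = 0 := by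
    linear_combination w * y * hl
      - (w * y + 4 * y * (x + y)) * hw - (w * y + 4 * w * (w + x)) * hy - w * y * hx
      - 12 * r1 - 6 * r5 - 4 * r2 - 12 * r3 - 4 * r4
  have B0 : w ^ 2 * x ^ 2 * y ^ 2 = 0 := by
    apply c2
    linear_combination 12 * r6 - 2 * e4 - 2 * e5 + 3 * e1
  have s1 : w ^ 3 * x ^ 3 + w ^ 3 * y ^ 3 = 0 := by
    apply c2; apply c2
    linear_combination e1 + 2 * B0
  have S0 : x ^ 3 * y ^ 3 = 0 := by
    apply c2; apply c2; apply c2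
    linear_combination e2 + e3 - 4 * s1 - 52 * B0
  have A3 : w ^ 3 * x ^ 2 * y = 3 * (w ^ 3 * x ^ 3) := by
    rw [← sub_eq_zero]
    apply c2
    linear_combination -e4 + 16 * B0
  have P0 : w ^ 3 * x ^ 3 = 0 := by
    apply c2; apply c2; apply c2; apply c5
    linear_combination e2 - 12 * A3 - 26 * B0 - 4 * S0
  have A0 : w ^ 3 * x ^ 2 * y = 0 := by rw [A3, P0, mul_zero]
  have Q0 : w ^ 3 * y ^ 3 = 0 := by linear_combination s1 - P0
  rw [A0, neg_zero] at r1
  rw [A0, B0] at r2 r3 r4 r5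
  have z4 : ∀ t : Q, t ^ 4 = 0 → ∀ n, 4 ≤ n → t ^ n = 0 := fun t ht n hn =>
    pow_eq_zero_of_le hn ht
  by_cases hi : 4 ≤ i
  · rw [z4 w hw i hi]; ring
  by_cases hj : 4 ≤ j
  · rw [z4 x hx j hj]; ring
  by_cases hk : 4 ≤ k
  · rw [z4 y hy k hk]; ring
  push Not at hi hj hk
  interval_cases i <;> interval_cases j <;> first
    | omega
    | (obtain rfl : k = 0 := by omega
       first | linear_combination P0)
    | (obtain rfl : k = 1 := by omega
       first | linear_combination A0 | linear_combination r2)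
    | (obtain rfl : k = 2 := by omega
       first | linear_combination r1 | linear_combination B0 | linear_combination r4)
    | (obtain rfl : k = 3 := by omega
       first | linear_combination r3 | linear_combination r5 | linear_combination Q0 | linear_combination S0)

lemma ideal_six {Q : Type*} [CommRing Q] (w x y : Q)
    (H : ∀ i j k : ℕ, i + j + k = 6 → w ^ i * x ^ j * y ^ k = 0) :
    Ideal.span {w, x, y} ^ 6 = ⊥ := by
  have : ∀ n : ℕ, Ideal.span {w, x, y} ^ n ≤
      Ideal.span {t | ∃ i j k : ℕ, i + j + k = n ∧ t = w ^ i * x ^ j * y ^ k} := by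
    intro n
    induction n with
    | zero =>
      intro t _
      have h1 : (1 : Q) ∈ Ideal.span {t | ∃ i j k : ℕ, i + j + k = 0 ∧
          t = w ^ i * x ^ j * y ^ k} := Ideal.subset_span ⟨0, 0, 0, rfl, by simp⟩
      rw [(Ideal.eq_top_iff_one _).2 h1]; trivial
    | succ n ih =>
      rw [pow_succ]
      refine (Ideal.mul_mono_left ih).trans ?_
      rw [Ideal.span_mul_span', Ideal.span_le]
      rintro _ ⟨_, ⟨i, j, k, hs, rfl⟩, v, hv, rfl⟩
      apply Ideal.subset_span
      simp only [Set.mem_insert_iff, Set.mem_singleton_iff] at hv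
      rcases hv with rfl | rfl | rfl
      · exact ⟨i + 1, j, k, by omega, by ring⟩
      · exact ⟨i, j + 1, k, by omega, by ring⟩
      · exact ⟨i, j, k + 1, by omega, by ring⟩
  rw [eq_bot_iff]
  refine (this 6).trans ?_
  rw [Ideal.span_le]
  rintro _ ⟨i, j, k, hs, rfl⟩
  simpa using H i j k hs

/-- The five generators. -/
noncomputable def gen (K : Type*) [Field K] : Fin 5 → MvPolynomial (Fin 4) K :=
  ![X 0 ^ 4, X 1 ^ 4, X 2 ^ 4, X 3 ^ 4, X 0 * X 1 * X 2 * (X 0 + X 3)]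

lemma gen_range (K : Type*) [Field K] :
    ({(X 0 : MvPolynomial (Fin 4) K) ^ 4, X 1 ^ 4, X 2 ^ 4, X 3 ^ 4,
      X 0 * X 1 * X 2 * (X 0 + X 3)} : Set (MvPolynomial (Fin 4) K)) = Set.range (gen K) := by
  ext t
  simp only [Set.mem_insert_iff, Set.mem_singleton_iff, Set.mem_range, Fin.exists_fin_succ, gen]
  simp [eq_comm]

/-- The ideal. -/
noncomputable def idl (K : Type*) [Field K] : Ideal (MvPolynomial (Fin 4) K) :=
  Ideal.span (Set.range (gen K))

lemma gen_mem {K : Type*} [Field K] (i : Fin 5) : gen K i ∈ idl K :=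
  Ideal.subset_span ⟨i, rfl⟩

lemma gen_hom {K : Type*} [Field K] (i : Fin 5) : (gen K i).IsHomogeneous 4 := by
  have hX : ∀ j : Fin 4, (X j : MvPolynomial (Fin 4) K).IsHomogeneous 1 :=
    fun j => isHomogeneous_X K j
  fin_cases i
  · exact (hX 0).pow 4
  · exact (hX 1).pow 4
  · exact (hX 2).pow 4
  · exact (hX 3).pow 4
  · exact (((hX 0).mul (hX 1)).mul (hX 2)).mul ((hX 0).add (hX 3))

lemma hc_mem {K : Type*} [Field K] {p : MvPolynomial (Fin 4) K} (n : ℕ) (h : p ∈ idl K) :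
    ∃ q : Fin 5 → MvPolynomial (Fin 4) K, (∀ i, (q i).IsHomogeneous (n - 4)) ∧
      (n < 4 → ∀ i, q i = 0) ∧ homogeneousComponent n p = ∑ i, q i * gen K i := by
  obtain ⟨g, rfl⟩ := Ideal.mem_span_range_iff_exists_fun.1 h
  by_cases hn : 4 ≤ n
  · refine ⟨fun i => homogeneousComponent (n - 4) (g i),
      fun i => homogeneousComponent_isHomogeneous _ _, fun h => absurd h (by omega), ?_⟩
    rw [map_sum]
    refine Finset.sum_congr rfl fun i _ => ?_
    rw [hc_mul (gen_hom i), if_pos hn]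
  · refine ⟨fun i => 0, fun i => isHomogeneous_zero _ _ _, fun _ _ => rfl, ?_⟩
    rw [map_sum]
    refine Finset.sum_congr rfl fun i _ => ?_
    rw [hc_mul (gen_hom i), if_neg hn, zero_mul]

/-- The Lefschetz element. -/
noncomputable def elt (K : Type*) [Field K] : MvPolynomial (Fin 4) K := X 0 + X 1 + X 2 - X 3

lemma elt_hom (K : Type*) [Field K] : (elt K).IsHomogeneous 1 :=
  (((isHomogeneous_X K 0).add (isHomogeneous_X K 1)).add (isHomogeneous_X K 2)).sub
    (isHomogeneous_X K 3)

/-- Elimination of the last variable. -/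
noncomputable def elim (K : Type*) [Field K] :
    MvPolynomial (Fin 4) K →ₐ[K] MvPolynomial (Fin 4) K :=
  aeval ![X 0, X 1, X 2, X 0 + X 1 + X 2]

lemma elim_dvd {K : Type*} [Field K] (p : MvPolynomial (Fin 4) K) : elt K ∣ p - elim K p := by
  rw [← Ideal.mem_span_singleton, ← Ideal.Quotient.eq]
  have : (Ideal.Quotient.mkₐ K (Ideal.span {elt K})) =
      (Ideal.Quotient.mkₐ K (Ideal.span {elt K})).comp (elim K) := by
    ext i
    fin_cases i
    · simp [elim]
    · simp [elim]
    · simp [elim]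
    · simp only [elim, AlgHom.comp_apply, aeval_X, Ideal.Quotient.mkₐ_eq_mk]
      rw [Ideal.Quotient.eq, Ideal.mem_span_singleton]
      exact ⟨-1, by simp [elt]⟩
  exact DFunLike.congr_fun this p

lemma rel_zero {K : Type*} [Field K] (h2 : (2 : K) ≠ 0) (h5 : (5 : K) ≠ 0)
    (q : Fin 5 → MvPolynomial (Fin 4) K) (hq : ∀ i, (q i).IsHomogeneous 1)
    (h : elim K (∑ i, q i * gen K i) = 0) (i : Fin 5) : elim K (q i) = 0 := by
  have : ∀ i, ∃ c : Fin 4 → K, ∑ j, c j • (X j : MvPolynomial (Fin 4) K) = q i := by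
    intro i
    have := (mem_homogeneousSubmodule 1 (q i)).2 (hq i)
    rw [homogeneousSubmodule_one_eq_span_X] at this
    exact (Submodule.mem_span_range_iff_exists_fun K).1 this
  choose c hc using this
  have e : ∀ i, elim K (q i) = C (c i 0 + c i 3) * X 0 + C (c i 1 + c i 3) * X 1
      + C (c i 2 + c i 3) * X 2 := by
    intro i
    rw [← hc i]
    simp [elim, Fin.sum_univ_four, smul_eq_C_mul]
    ring
  have := key_rel h2 h5 (fun i => c i 0 + c i 3) (fun i => c i 1 + c i 3)
    (fun i => c i 2 + c i 3) (by
      rw [← h, map_sum, Fin.sum_univ_five]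
      simp only [map_mul, e]
      simp [gen, elim])
  rw [e, (this i).1, (this i).2.1, (this i).2.2]
  simp

lemma elt_inj {K : Type*} [Field K] (h2 : (2 : K) ≠ 0) (h5 : (5 : K) ≠ 0) (d : ℕ) (hd : d ≤ 4) :
    mulMapInj 4 K (idl K) (elt K) d := by
  rintro _ ⟨p, hp, rfl⟩ h
  have hp : p.IsHomogeneous d := hp
  change Ideal.Quotient.mk (idl K) (elt K) * Ideal.Quotient.mk (idl K) p = 0 at h
  change Ideal.Quotient.mk (idl K) p = 0
  rw [← map_mul, Ideal.Quotient.eq_zero_iff_mem] at h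
  rw [Ideal.Quotient.eq_zero_iff_mem]
  have hL := (elt_hom K).mul hp
  obtain ⟨q, hq, hq0, hs⟩ := hc_mem (1 + d) h
  rw [homogeneousComponent_eq_self hL] at hs
  have hel : elim K (elt K) = 0 := by simp [elim, elt]
  have hne : elt K ≠ 0 := by
    intro h0
    have := congrArg (eval ![1, 0, 0, 0]) h0
    simp [elt] at this
  have hz : elim K (∑ i, q i * gen K i) = 0 := by rw [← hs, map_mul, hel, zero_mul]
  have hqz : ∀ i, elim K (q i) = 0 := by
    intro i
    rcases lt_trichotomy d 3 with h3 | h3 | h3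
    · rw [hq0 (by omega) i, map_zero]
    · subst h3
      have := rel_zero h2 h5 (fun i => X 0 * q i)
        (fun i => (isHomogeneous_X K 0).mul (hq i)) (by
          simp only [mul_assoc]
          rw [← Finset.mul_sum, map_mul, hz, mul_zero]) i
      rw [map_mul] at this
      refine (mul_eq_zero.1 this).resolve_left ?_
      simp [elim]
    · obtain rfl : d = 4 := by omega
      exact rel_zero h2 h5 q hq hz i
  have hdv : ∀ i, ∃ r, q i = elt K * r := fun i => by
    have := elim_dvd (q i)
    rwa [hqz i, sub_zero] at this
  choose r hr using hdv
  have : p = ∑ i, r i * gen K i := by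
    apply mul_left_cancel₀ hne
    rw [hs, Finset.mul_sum]
    refine Finset.sum_congr rfl fun i _ => ?_
    rw [hr i, mul_assoc]
  rw [this]
  exact Ideal.sum_mem _ fun i _ => Ideal.mul_mem_left _ _ (gen_mem i)

lemma elt_surj {K : Type*} [Field K] (h2 : (2 : K) ≠ 0) (h5 : (5 : K) ≠ 0) (d : ℕ) (hd : 5 ≤ d) :
    mulMapSurj 4 K (idl K) (elt K) d := by
  rintro _ ⟨p, hp, rfl⟩
  have hp : p.IsHomogeneous (d + 1) := hp
  have hpJ : p ∈ idl K ⊔ Ideal.span {elt K} := by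
    set J := idl K ⊔ Ideal.span {elt K} with hJ
    have g0 : ∀ i, Ideal.Quotient.mk J (gen K i) = 0 := fun i =>
      Ideal.Quotient.eq_zero_iff_mem.2 (Ideal.mem_sup_left (gen_mem i))
    have l0 : Ideal.Quotient.mk J (elt K) = 0 :=
      Ideal.Quotient.eq_zero_iff_mem.2 (Ideal.mem_sup_right (Ideal.mem_span_singleton_self _))
    have hz : Ideal.Quotient.mk J (X 3) = Ideal.Quotient.mk J (X 0) + Ideal.Quotient.mk J (X 1)
        + Ideal.Quotient.mk J (X 2) := by
      simp only [elt, map_sub, map_add] at l0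
      linear_combination -l0
    have un : ∀ n : K, n ≠ 0 → IsUnit (Ideal.Quotient.mk J (C n)) := fun n hn =>
      ((isUnit_iff_ne_zero.2 hn).map C).map _
    have u2 : IsUnit (2 : MvPolynomial (Fin 4) K ⧸ J) := by
      have := un 2 h2
      rwa [map_ofNat, map_ofNat] at this
    have u5 : IsUnit (5 : MvPolynomial (Fin 4) K ⧸ J) := by
      have := un 5 h5
      rwa [map_ofNat, map_ofNat] at this
    have f0 := g0 0
    have f1 := g0 1
    have f2 := g0 2
    have f3 := g0 3
    have f4 := g0 4
    simp [gen, hz] at f0 f1 f2 f3 f4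
    have hM := ideal_six _ _ _ (deg_six u2 u5 _ _ _ f0 f1 f2 f3 f4)
    have := pow_mem (Ideal.Quotient.mk J) (Ideal.span {Ideal.Quotient.mk J (X 0),
      Ideal.Quotient.mk J (X 1), Ideal.Quotient.mk J (X 2)}) (by
        have m0 : Ideal.Quotient.mk J (X 0) ∈ Ideal.span {Ideal.Quotient.mk J (X 0),
          Ideal.Quotient.mk J (X 1), Ideal.Quotient.mk J (X 2)} := Ideal.subset_span (by simp)
        have m1 : Ideal.Quotient.mk J (X 1) ∈ Ideal.span {Ideal.Quotient.mk J (X 0),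
          Ideal.Quotient.mk J (X 1), Ideal.Quotient.mk J (X 2)} := Ideal.subset_span (by simp)
        have m2 : Ideal.Quotient.mk J (X 2) ∈ Ideal.span {Ideal.Quotient.mk J (X 0),
          Ideal.Quotient.mk J (X 1), Ideal.Quotient.mk J (X 2)} := Ideal.subset_span (by simp)
        intro i
        fin_cases i
        · exact m0
        · exact m1
        · exact m2
        · change Ideal.Quotient.mk J (X 3) ∈ _
          rw [hz]
          exact Ideal.add_mem _ (Ideal.add_mem _ m0 m1) m2) hp
    have := Ideal.pow_le_pow_right (show 6 ≤ d + 1 by omega) this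
    rw [hM, Ideal.mem_bot, Ideal.Quotient.eq_zero_iff_mem] at this
    exact this
  obtain ⟨u, hu, v, hv, huv⟩ := Submodule.mem_sup.1 hpJ
  obtain ⟨t, rfl⟩ := Ideal.mem_span_singleton'.1 hv
  refine ⟨_, ⟨homogeneousComponent d t, homogeneousComponent_isHomogeneous _ _, rfl⟩, ?_⟩
  change Ideal.Quotient.mk (idl K) (elt K) * Ideal.Quotient.mk (idl K) _
    = Ideal.Quotient.mk (idl K) p
  rw [← map_mul, eq_comm, Ideal.Quotient.eq]
  have h1 := congrArg (homogeneousComponent (d + 1)) huv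
  rw [homogeneousComponent_eq_self hp, map_add, hc_mul (elt_hom K), if_pos (by omega),
    Nat.add_sub_cancel] at h1
  obtain ⟨q, -, -, hs⟩ := hc_mem (d + 1) hu
  have : p - elt K * homogeneousComponent d t = ∑ i, q i * gen K i := by
    rw [← hs, ← h1]; ring
  rw [this]
  exact Ideal.sum_mem _ fun i _ => Ideal.mul_mem_left _ _ (gen_mem i)

lemma top_not_mem {K : Type*} [Field K] :
    (X 1 ^ 3 * X 2 ^ 3 * X 3 ^ 3 : MvPolynomial (Fin 4) K) ∉ idl K := by
  intro h
  obtain ⟨g, hg⟩ := Ideal.mem_span_range_iff_exists_fun.1 h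
  have t0 : (X 0 ^ 4 : MvPolynomial (Fin 4) K) = monomial (mo 4 0 0 0) 1 := by
    rw [← term_eq]; simp
  have t1 : (X 1 ^ 4 : MvPolynomial (Fin 4) K) = monomial (mo 0 4 0 0) 1 := by
    rw [← term_eq]; simp
  have t2 : (X 2 ^ 4 : MvPolynomial (Fin 4) K) = monomial (mo 0 0 4 0) 1 := by
    rw [← term_eq]; simp
  have t3 : (X 3 ^ 4 : MvPolynomial (Fin 4) K) = monomial (mo 0 0 0 4) 1 := by
    rw [← term_eq]; simp
  have t4 : (X 0 * X 1 * X 2 * (X 0 + X 3) : MvPolynomial (Fin 4) K)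
      = monomial (mo 2 1 1 0) 1 + monomial (mo 1 1 1 1) 1 := by
    rw [← term_eq, ← term_eq]; simp; ring
  have t5 : (X 1 ^ 3 * X 2 ^ 3 * X 3 ^ 3 : MvPolynomial (Fin 4) K)
      = monomial (mo 0 3 3 3) 1 := by
    rw [← term_eq]; simp
  have nle : ∀ a b c d : ℕ, (1 ≤ a ∨ 4 ≤ b ∨ 4 ≤ c ∨ 4 ≤ d) → ¬ mo a b c d ≤ mo 0 3 3 3 := by
    intro a b c d h hle
    have h0 := hle 0
    have h1 := hle 1
    have h2 := hle 2
    have h3 := hle 3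
    simp [mo] at h0 h1 h2 h3
    omega
  have := congrArg (coeff (mo 0 3 3 3)) hg
  rw [t5, Fin.sum_univ_five] at this
  simp only [gen, Matrix.cons_val, t0, t1, t2, t3, t4, mul_add, coeff_add, coeff_mul_monomial',
    coeff_monomial] at this
  rw [if_neg (nle _ _ _ _ (by omega)), if_neg (nle _ _ _ _ (by omega)),
    if_neg (nle _ _ _ _ (by omega)), if_neg (nle _ _ _ _ (by omega)),
    if_neg (nle _ _ _ _ (by omega)), if_neg (nle _ _ _ _ (by omega))] at this
  simp at this

lemma pow_le_of_step {A : Type*} [CommRing A] (M : Ideal A) (N : ℕ → Ideal A)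
    (h0 : 1 ∈ N 0) (hs : ∀ k, N k * M ≤ N (k + 1)) (k : ℕ) : M ^ k ≤ N k := by
  induction k with
  | zero => rw [(Ideal.eq_top_iff_one _).2 h0]; exact le_top
  | succ k ih =>
    rw [pow_succ]
    exact (Ideal.mul_mono_left ih).trans (hs k)

lemma pow_le_iter {A : Type*} [CommRing A] (M S : Ideal A) (d : ℕ)
    (step : M ^ (d + 1) ≤ S * M ^ d) (k : ℕ) : M ^ (d + k) ≤ S ^ k * M ^ d := by
  induction k with
  | zero => simp
  | succ k ih =>
    calc M ^ (d + (k + 1)) = M ^ (d + k) * M := by rw [← add_assoc, pow_succ]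
      _ ≤ S ^ k * M ^ d * M := Ideal.mul_mono_left ih
      _ = S ^ k * M ^ (d + 1) := by rw [mul_assoc, pow_succ]
      _ ≤ S ^ k * (S * M ^ d) := Ideal.mul_mono_right step
      _ = _ := by rw [pow_succ, mul_assoc]

lemma no_wlp {K : Type*} [Field K] (L : MvPolynomial (Fin 4) K) (h5 : L ^ 5 ∈ idl K) :
    ¬ isLefschetzElem 4 K (idl K) L := by
  classical
  rintro ⟨hL, H⟩
  have hL : L.IsHomogeneous 1 := hL
  set mk := Ideal.Quotient.mk (idl K) with hmk
  have hex : ∃ n, mk L ^ n = 0 := ⟨5, by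
    rw [← map_pow]; exact Ideal.Quotient.eq_zero_iff_mem.2 h5⟩
  have hn := Nat.find_spec hex
  have hmin : ∀ m, m < Nat.find hex → mk L ^ m ≠ 0 := fun m hm => Nat.find_min hex hm
  have hle : Nat.find hex ≤ 5 := Nat.find_min' hex (by
    rw [← map_pow]; exact Ideal.Quotient.eq_zero_iff_mem.2 h5)
  have top0 : mk (X 1 ^ 3 * X 2 ^ 3 * X 3 ^ 3) ≠ 0 := fun h =>
    top_not_mem (Ideal.Quotient.eq_zero_iff_mem.1 h)
  generalize Nat.find hex = n at hn hmin hle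
  obtain _ | d := n
  · rw [pow_zero] at hn
    apply top0
    rw [← mul_one (mk _), hn, mul_zero]
  rcases H d with hi | hs
  · refine hmin d (by omega) (hi _ ⟨L ^ d, ?_, by simp [hmk]⟩ ?_)
    · have := hL.pow d
      rwa [one_mul] at this
    · rw [← pow_succ']; exact hn
  · let M : Ideal (MvPolynomial (Fin 4) K ⧸ idl K) := Ideal.span (Set.range fun i => mk (X i))
    have hM : ∀ i, mk (X i) ∈ M := fun i => Ideal.subset_span ⟨i, rfl⟩
    have gens : ∀ k, M ^ k ≤ Ideal.span (component 4 K (idl K) k : Set _) := by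
      refine pow_le_of_step M _ ?_ fun k => ?_
      · exact Ideal.subset_span ⟨1, isHomogeneous_one _ _, by simp⟩
      · rw [Ideal.span_mul_span', Ideal.span_le]
        rintro _ ⟨_, ⟨p, hp, rfl⟩, _, ⟨i, rfl⟩, rfl⟩
        apply Ideal.subset_span
        have hp : p.IsHomogeneous k := hp
        exact ⟨p * X i, hp.mul (isHomogeneous_X K i), by simp [hmk]⟩
    have step : M ^ (d + 1) ≤ Ideal.span {mk L} * M ^ d := by
      refine (gens (d + 1)).trans ?_
      rw [Ideal.span_le]
      intro b hb
      obtain ⟨_, ⟨p, hp, rfl⟩, rfl⟩ := hs b hb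
      exact Ideal.mul_mem_mul (Ideal.mem_span_singleton_self _) (pow_mem mk M hM hp)
    have iter := pow_le_iter M (Ideal.span {mk L}) d step
    apply top0
    have hX := fun i => (isHomogeneous_X K (i : Fin 4)).pow 3
    have h9 := pow_mem mk M hM (((hX 1).mul (hX 2)).mul (hX 3))
    have h9 : mk (X 1 ^ 3 * X 2 ^ 3 * X 3 ^ 3) ∈ M ^ (d + (9 - d)) := by
      rw [show d + (9 - d) = 9 by omega]; exact h9
    have := iter _ h9
    rw [Ideal.span_singleton_pow, pow_eq_zero_of_le (show d + 1 ≤ 9 - d by omega) hn] at this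
    simpa using this

lemma pow_p_mem {K : Type*} [Field K] (p k : ℕ) [Fact p.Prime] [CharP K p] (hk : 4 ≤ p ^ k)
    (L : MvPolynomial (Fin 4) K) (hL : L.IsHomogeneous 1) : L ^ p ^ k ∈ idl K := by
  have := (mem_homogeneousSubmodule 1 L).2 hL
  rw [homogeneousSubmodule_one_eq_span_X] at this
  obtain ⟨c, rfl⟩ := (Submodule.mem_span_range_iff_exists_fun K).1 this
  rw [sum_pow_char_pow]
  refine Ideal.sum_mem _ fun i _ => ?_
  rw [smul_pow, smul_eq_C_mul]
  refine Ideal.mul_mem_left _ _ ?_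
  refine Ideal.mem_of_dvd _ (pow_dvd_pow _ hk) ?_
  fin_cases i
  · exact gen_mem 0
  · exact gen_mem 1
  · exact gen_mem 2
  · exact gen_mem 3

end WLPaux

open WLPaux in
/-- `K[w,x,y,z]/(w⁴, x⁴, y⁴, z⁴, wxy(w+z))` has the WLP iff `char K ∉ {2, 5}`. -/
theorem stmt_12 {K : Type*} [Field K] :
    hasWLP 4 K (Ideal.span {(X 0 : MvPolynomial (Fin 4) K) ^ 4, X 1 ^ 4, X 2 ^ 4, X 3 ^ 4,
      X 0 * X 1 * X 2 * (X 0 + X 3)}) ↔ (ringChar K ≠ 2 ∧ ringChar K ≠ 5) := by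
  rw [gen_range]
  change hasWLP 4 K (idl K) ↔ _
  constructor
  · rintro ⟨L, hL⟩
    refine ⟨fun h => ?_, fun h => ?_⟩
    · have : CharP K 2 := ringChar.of_eq h
      have : Fact (Nat.Prime 2) := ⟨Nat.prime_two⟩
      refine no_wlp L ?_ hL
      have h4 := pow_p_mem 2 2 (by norm_num) L hL.1
      rw [pow_succ]
      exact Ideal.mul_mem_right _ _ h4
    · have : CharP K 5 := ringChar.of_eq h
      have : Fact (Nat.Prime 5) := ⟨Nat.prime_five⟩
      refine no_wlp L ?_ hL
      simpa using pow_p_mem 5 1 (by norm_num) L hL.1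
  · rintro ⟨h2, h5⟩
    have ne : ∀ p : ℕ, p.Prime → ringChar K ≠ p → (p : K) ≠ 0 := by
      intro p hp hne h0
      rcases (Nat.dvd_prime hp).1 ((ringChar.spec K p).1 h0) with h | h
      · exact CharP.ringChar_ne_one h
      · exact hne h
    have h2' : (2 : K) ≠ 0 := by exact_mod_cast ne 2 Nat.prime_two h2
    have h5' : (5 : K) ≠ 0 := by exact_mod_cast ne 5 Nat.prime_five h5
    refine ⟨elt K, elt_hom K, fun d => ?_⟩
    rcases Nat.lt_or_ge d 5 with hd | hd
    · exact Or.inl (elt_inj h2' h5' d (by omega))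
    · exact Or.inr (elt_surj h2' h5' d hd)
end
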